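/- arXiv:2505.05662 — 8 statements merged into one kernel-verified Lean document; each statement's English description precedes it below -/
import Mathlib

section
/- Let P be the path u,w,v of length 2 and let L be an m-assignment for P with m ≥ 3. For c ∈ L(u) and d ∈ L(v), let N(c,d) be the number of proper L-colorings of P that color u with c and v with d, and let a = |L(u) ∩ L(v)|. Then (i) m−2 ≤ N(c,d) ≤ m for every (c,d) ∈ L(u)×L(v), and (ii) the number of ordered pairs (c,d) ∈ L(u)×L(v) with N(c,d) = m−2 is at most (a+m)²/4 − a. -/
/-!
Write `A = L(u)`, `W = L(w)`, `B = L(v)`. Once the ends are colored `c` and `d`, only the middle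
vertex is free, so `N(c,d) = |W \ {c,d}|` (`pathCount_two`). This gives (i), and shows that
`N(c,d) = m - 2` exactly when `c ≠ d` and `c, d ∈ W`. With `x = |A ∩ W|`, `y = |B ∩ W|` and
`t = |A ∩ B ∩ W|`, the number of such pairs is therefore `xy - t`. Inclusion-exclusion inside `W`
gives `x + y ≤ m + t`, so by AM-GM `xy - t ≤ (m + t)² / 4 - t`. The right-hand side is
nondecreasing in `t ≥ 0` because `m ≥ 2`, and `t ≤ a`.
-/

/-- `N(c,d)` for a path: the number of proper `L`-colorings of the path
`x_0, x_1, …, x_n` (on `n+1` vertices, with consecutive vertices adjacent)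
that color `x_0` with `c` and `x_n` with `d`.  A proper `L`-coloring assigns each vertex a
color from its list so that adjacent vertices get different colors. -/
noncomputable def pathCount (n : ℕ) (L : Fin (n+1) → Finset ℕ) (c d : ℕ) : ℕ :=
  Nat.card {f : Fin (n+1) → ℕ // (∀ v, f v ∈ L v) ∧
    (∀ i : Fin n, f i.castSucc ≠ f i.succ) ∧ f 0 = c ∧ f (Fin.last n) = d}

theorem pathCount_two (L : Fin 3 → Finset ℕ) {c d : ℕ} (hc : c ∈ L 0) (hd : d ∈ L 2) :
    pathCount 2 L c d = (L 1 \ {c, d}).card := by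
  rw [pathCount, ← Fintype.card_coe, ← Nat.card_eq_fintype_card]
  refine Nat.card_congr
    { toFun := fun f => ⟨f.1 1, ?_⟩
      invFun := fun x => ⟨![c, x.1, d], ?_⟩
      left_inv := ?_
      right_inv := fun x => rfl }
  · obtain ⟨f, hf, hadj, h0, h2⟩ := f
    have e0 : f 0 ≠ f 1 := hadj 0
    have e1 : f 1 ≠ f 2 := hadj 1
    have h2' : f 2 = d := h2
    simp only [Finset.mem_sdiff, Finset.mem_insert, Finset.mem_singleton, not_or]
    exact ⟨hf 1, fun h => e0 (h0.trans h.symm), fun h => e1 (h.trans h2'.symm)⟩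
  · obtain ⟨x, hx⟩ := x
    simp only [Finset.mem_sdiff, Finset.mem_insert, Finset.mem_singleton, not_or] at hx
    refine ⟨?_, ?_, rfl, rfl⟩
    · intro v
      fin_cases v
      exacts [hc, hx.1, hd]
    · intro i
      fin_cases i
      exacts [fun h => hx.2.1 h.symm, hx.2.2]
  · rintro ⟨f, hf, hadj, h0, h2⟩
    apply Subtype.ext
    funext i
    fin_cases i
    exacts [h0.symm, rfl, h2.symm]

/-- Split `S × T` into off-diagonal and diagonal pairs; the diagonal is a copy of `S ∩ T`. -/
theorem card_filter_ne_add_card_inter (S T : Finset ℕ) :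
    ((S ×ˢ T).filter fun p => p.1 ≠ p.2).card + (S ∩ T).card = S.card * T.card := by
  have hdiag : (S ∩ T).card = ((S ×ˢ T).filter fun p => p.1 = p.2).card := by
    refine Finset.card_bij (fun s _ => (s, s)) ?_ ?_ ?_
    · intro s hs
      simpa using hs
    · intro s _ t _ h
      exact congrArg Prod.fst h
    · rintro ⟨s, t⟩ h
      simp only [Finset.mem_filter, Finset.mem_product] at h
      obtain ⟨⟨hs, ht⟩, rfl⟩ := h
      exact ⟨s, Finset.mem_inter.2 ⟨hs, ht⟩, rfl⟩
  rw [hdiag, add_comm, ← Finset.card_product]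
  exact Finset.card_filter_add_card_filter_not _

/-- Removing `c` and `d` costs two elements exactly when they are distinct and both in `W`. The
hypothesis on `W` keeps the subtraction from truncating. -/
theorem card_sdiff_pair_eq_iff {W : Finset ℕ} (hW : 2 ≤ W.card) (c d : ℕ) :
    (W \ {c, d}).card = W.card - 2 ↔ c ∈ W ∧ d ∈ W ∧ c ≠ d := by
  have h1 := Finset.card_sdiff_add_card_inter W {c, d}
  have h2 : ({c, d} : Finset ℕ).card ≤ 2 := Finset.card_le_two
  have h3 := Finset.card_le_card (Finset.inter_subset_right (s₁ := W) (s₂ := {c, d}))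
  constructor
  · intro h
    have heq : W ∩ {c, d} = {c, d} :=
      Finset.eq_of_subset_of_card_le Finset.inter_subset_right (by omega)
    have hsub := Finset.inter_eq_right.1 heq
    refine ⟨hsub (by simp), hsub (by simp), ?_⟩
    rintro rfl
    simp only [Finset.pair_eq_singleton, Finset.card_singleton] at *
    omega
  · rintro ⟨hc, hd, hne⟩
    have heq : W ∩ {c, d} = {c, d} := Finset.inter_eq_right.2 (by
      intro e he
      rcases Finset.mem_insert.1 he with rfl | he
      · exact hc
      · rwa [Finset.mem_singleton.1 he])
    rw [heq, Finset.card_pair hne] at h1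
    omega

/-- Let `P` be the path `u, w, v` of length 2 (here `u = 0`, `w = 1`, `v = 2`) and let `L` be
an `m`-assignment for `P` with `m ≥ 3`.  With `N(c,d)` the number of proper `L`-colorings of
`P` coloring `u` with `c` and `v` with `d`, and `a = |L(u) ∩ L(v)|`:
(i) `m - 2 ≤ N(c,d) ≤ m` for every `(c,d) ∈ L(u) × L(v)`, and
(ii) the number of ordered pairs `(c,d) ∈ L(u) × L(v)` with `N(c,d) = m - 2` is at most
`(a+m)²/4 - a`. -/
theorem path2_count_bounds (m : ℕ) (hm : 3 ≤ m) (L : Fin 3 → Finset ℕ)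
    (hL : ∀ v, (L v).card = m) :
    (∀ c ∈ L 0, ∀ d ∈ L 2, m - 2 ≤ pathCount 2 L c d ∧ pathCount 2 L c d ≤ m) ∧
    (({p : ℕ × ℕ | p.1 ∈ L 0 ∧ p.2 ∈ L 2 ∧ pathCount 2 L p.1 p.2 = m - 2}.ncard : ℝ) ≤
      ((((L 0) ∩ (L 2)).card : ℝ) + m)^2 / 4 - (((L 0) ∩ (L 2)).card : ℝ)) := by
  have hW := hL 1
  constructor
  · intro c hc d hd
    rw [pathCount_two L hc hd, ← hW]
    have h1 := Finset.le_card_sdiff {c, d} (L 1)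
    have h2 : ({c, d} : Finset ℕ).card ≤ 2 := Finset.card_le_two
    exact ⟨by omega, Finset.card_le_card Finset.sdiff_subset⟩
  · set S := L 0 ∩ L 1 with hS
    set T := L 2 ∩ L 1 with hT
    have hset : {p : ℕ × ℕ | p.1 ∈ L 0 ∧ p.2 ∈ L 2 ∧ pathCount 2 L p.1 p.2 = m - 2} =
        ((S ×ˢ T).filter fun p => p.1 ≠ p.2 : Finset (ℕ × ℕ)) := by
      ext ⟨c, d⟩
      simp only [Set.mem_ofPred_eq, Finset.mem_coe, Finset.mem_filter, Finset.mem_product, hS, hT,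
        Finset.mem_inter]
      have key := card_sdiff_pair_eq_iff (W := L 1) (by omega) c d
      rw [hW] at key
      constructor
      · rintro ⟨hc, hd, h⟩
        rw [pathCount_two L hc hd] at h
        obtain ⟨h1, h2, h3⟩ := key.1 h
        exact ⟨⟨⟨hc, h1⟩, hd, h2⟩, h3⟩
      · rintro ⟨⟨⟨hc, h1⟩, hd, h2⟩, h3⟩
        refine ⟨hc, hd, ?_⟩
        rw [pathCount_two L hc hd]
        exact key.2 ⟨h1, h2, h3⟩
    rw [hset, Set.ncard_coe_finset]
    have hcount := card_filter_ne_add_card_inter S T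
    have hsum : S.card + T.card ≤ m + (S ∩ T).card := by
      rw [← Finset.card_union_add_card_inter, ← hW]
      gcongr
      exact Finset.union_subset Finset.inter_subset_right Finset.inter_subset_right
    have hta : (S ∩ T).card ≤ (L 0 ∩ L 2).card :=
      Finset.card_le_card
        (Finset.inter_subset_inter Finset.inter_subset_left Finset.inter_subset_left)
    generalize ((S ×ˢ T).filter fun p => p.1 ≠ p.2).card = n at *
    generalize S.card = x at *
    generalize T.card = y at *
    generalize (S ∩ T).card = t at *
    generalize (L 0 ∩ L 2).card = a at *
    have hcount' : (n : ℝ) + t = x * y := by exact_mod_cast hcount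
    have hsum' : (x : ℝ) + y ≤ m + t := by exact_mod_cast hsum
    have hta' : (t : ℝ) ≤ a := by exact_mod_cast hta
    have hm' : (3 : ℝ) ≤ m := by exact_mod_cast hm
    have hx : (0 : ℝ) ≤ x := x.cast_nonneg
    have hy : (0 : ℝ) ≤ y := y.cast_nonneg
    have ht : (0 : ℝ) ≤ t := t.cast_nonneg
    have hsq : ((x : ℝ) + y) ^ 2 ≤ (m + t) ^ 2 := by gcongr
    have hamgm : (n : ℝ) ≤ (m + t) ^ 2 / 4 - t := by nlinarith [sq_nonneg ((x : ℝ) - y)]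
    -- The increment of `s ↦ (m + s)² / 4 - s` from `t` to `a` is `(a - t) (2m + a + t - 4) / 4`.
    have hmono : (0 : ℝ) ≤ (a - t) * (2 * m + a + t - 4) :=
      mul_nonneg (by linarith) (by linarith)
    nlinarith
end

section
/- Let P = x₁,x₂,…,x_{2k+1} be a path on 2k+1 vertices with k ≥ 1, and let L be an m-assignment for P with m ≥ 3. For c ∈ L(x₁) and d ∈ L(x_{2k+1}), let N(c,d) be the number of proper L-colorings of P that color x₁ with c and x_{2k+1} with d. Then N(c,d) ≥ ((m−1)^{2k+1} − (m−1))/(m(m−1)) for every (c,d) ∈ L(x₁)×L(x_{2k+1}), and there exist at least m pairs (y,z) ∈ L(x₁)×L(x_{2k+1}) such that N(y,z) ≥ ((m−1)^{2k} + (m−1))/m. -/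
lemma exists_equiv_fixing_inter (A B : Finset ℕ) (h : A.card = B.card) :
    ∃ τ : A ≃ B, ∀ c : A, (c : ℕ) ∈ B → (τ c : ℕ) = c := by
  obtain ⟨g, hg⟩ := Finset.exists_equiv_extend_of_card_eq (α := A) (t := B) (by simpa using h)
    (s := Finset.univ.filter fun a : A => (a : ℕ) ∈ B) (f := fun a => (a : ℕ))
    (by intro x hx
        simp only [Finset.mem_image, Finset.mem_filter] at hx
        obtain ⟨a, ha, rfl⟩ := hx
        exact ha.2)
    (fun a _ b _ hab => Subtype.ext hab)
  exact ⟨g, fun c hc => hg c (by simpa using hc)⟩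

lemma finite_colorings (n : ℕ) (L : Fin (n+1) → Finset ℕ) (c d : ℕ) :
    Finite {f : Fin (n+1) → ℕ // (∀ v, f v ∈ L v) ∧
      (∀ i : Fin n, f i.castSucc ≠ f i.succ) ∧ f 0 = c ∧ f (Fin.last n) = d} := by
  refine Set.Finite.to_subtype (Set.Finite.subset (Fintype.piFinset L).finite_toSet ?_)
  intro f hf
  simpa using hf.1

/-- Summing over a set `s` of colors for the second vertex, all different from the color `c` of the
first, undercounts the colorings of the longer path. -/
lemma pathCount_succ_ge (n : ℕ) (L : Fin (n+1+1) → Finset ℕ) (c d : ℕ) (hc : c ∈ L 0)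
    (s : Finset (Fin.tail L 0)) (hs : ∀ e ∈ s, (e : ℕ) ≠ c) :
    ∑ e ∈ s, pathCount n (Fin.tail L) e d ≤ pathCount (n+1) L c d := by
  have := fun e => finite_colorings n (Fin.tail L) e d
  have := finite_colorings (n+1) L c d
  rw [← Finset.sum_coe_sort]
  unfold pathCount
  rw [← Nat.card_sigma]
  refine Nat.card_le_card_of_injective (fun p => ⟨Fin.cons c p.2.1, ?_, ?_, rfl, ?_⟩) ?_
  · intro v
    refine Fin.cases ?_ (fun i => ?_) v
    · simpa using hc
    · exact p.2.2.1 i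
  · intro i
    refine Fin.cases ?_ (fun i => ?_) i
    · simpa [p.2.2.2.2.1] using (hs p.1.1 p.1.2).symm
    · simpa [← Fin.succ_castSucc] using p.2.2.2.1 i
  · rw [← Fin.succ_last, Fin.cons_succ]
    exact p.2.2.2.2.2
  · rintro ⟨⟨e, he⟩, f, hf⟩ ⟨⟨e', he'⟩, f', hf'⟩ h
    have hff : f = f' := Fin.cons_right_injective (α := fun _ => ℕ) c (Subtype.ext_iff.mp h)
    subst hff
    obtain rfl : e = e' := Subtype.ext (hf.2.2.1.symm.trans hf'.2.2.1)
    rfl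

lemma pathCount_zero_self (L : Fin 1 → Finset ℕ) (c : ℕ) (hc : c ∈ L 0) :
    1 ≤ pathCount 0 L c c := by
  have := finite_colorings 0 L c c
  have : Nonempty {f : Fin 1 → ℕ // (∀ v, f v ∈ L v) ∧
      (∀ i : Fin 0, f i.castSucc ≠ f i.succ) ∧ f 0 = c ∧ f (Fin.last 0) = c} :=
    ⟨fun _ => c, fun v => by rwa [Subsingleton.elim v 0], fun i => i.elim0, rfl, rfl⟩
  exact Nat.card_pos

/-- The number of colorings is bounded below by the entries of `(J - I)^n`, with columns relabelled
by `σ`. -/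
lemma exists_equiv_pathCount_ge (m : ℕ) (hm : 3 ≤ m) (n : ℕ) (L : Fin (n+1) → Finset ℕ)
    (hL : ∀ v, (L v).card = m) :
    ∃ σ : L 0 ≃ L (Fin.last n), ∀ (c : L 0) (d : L (Fin.last n)),
      (if σ c = d then ((m - 1 : ℝ)^n + (-1)^n * (m - 1)) / m else ((m - 1 : ℝ)^n - (-1)^n) / m)
        ≤ (pathCount n L c d : ℝ) := by
  have hm0 : (m : ℝ) ≠ 0 := by positivity
  induction n with
  | zero =>
    refine ⟨Equiv.refl _, fun c d => ?_⟩
    split_ifs with h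
    · subst h
      have := pathCount_zero_self L c c.2
      have h1 : (1 : ℝ) ≤ pathCount 0 L c c := by exact_mod_cast this
      simpa [hm0] using h1
    · simp
  | succ n ih =>
    obtain ⟨σ, hσ⟩ := ih (Fin.tail L) (fun v => hL _)
    obtain ⟨τ, hτ⟩ := exists_equiv_fixing_inter (L 0) (Fin.tail L 0) ((hL 0).trans (hL _).symm)
    refine ⟨τ.trans σ, fun c (d : Fin.tail L (Fin.last n)) => ?_⟩
    have key := pathCount_succ_ge n L c d c.2 (Finset.univ.erase (τ c)) (by
      intro e he hec
      refine (Finset.mem_erase.mp he).1 (Subtype.ext ?_)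
      rw [hec, hτ c (hec ▸ e.2)])
    have key' : (∑ e ∈ Finset.univ.erase (τ c), (pathCount n (Fin.tail L) e d : ℝ))
        ≤ pathCount (n+1) L c d := by exact_mod_cast key
    refine le_trans ?_ (le_trans (Finset.sum_le_sum fun e _ => hσ e d) key')
    have hcard : (Finset.univ.erase (τ c)).card = m - 1 := by
      rw [Finset.card_erase_of_mem (Finset.mem_univ _), Finset.card_univ, Fintype.card_coe, Fin.tail, hL]
    change (if σ (τ c) = d then _ else _) ≤ _
    split_ifs with h
    · rw [Finset.sum_congr rfl (g := fun _ => ((m - 1 : ℝ)^n - (-1)^n) / m)]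
      · rw [Finset.sum_const, hcard, nsmul_eq_mul, Nat.cast_sub (by lia)]
        apply le_of_eq
        push_cast
        ring
      · intro e he
        rw [if_neg]
        rintro rfl
        exact (Finset.mem_erase.mp he).1 (σ.injective h).symm
    -- the unique `e` with `σ e = d` survives in the sum and contributes the diagonal entry
    · have hmem : σ.symm d ∈ Finset.univ.erase (τ c) := by
        refine Finset.mem_erase.mpr ⟨?_, Finset.mem_univ _⟩
        intro hd
        exact h (by rw [← hd, Equiv.apply_symm_apply])
      rw [← Finset.add_sum_erase _ _ hmem, if_pos (Equiv.apply_symm_apply _ _),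
        Finset.sum_congr rfl (g := fun _ => ((m - 1 : ℝ)^n - (-1)^n) / m)]
      · rw [Finset.sum_const, Finset.card_erase_of_mem hmem, hcard, nsmul_eq_mul,
          Nat.cast_sub (by lia), Nat.cast_sub (by lia)]
        apply le_of_eq
        push_cast
        ring
      · intro e he
        rw [if_neg]
        rintro rfl
        exact (Finset.mem_erase.mp he).1 (σ.symm_apply_apply e).symm

/-- Let `P = x₁, …, x_{2k+1}` be a path on `2k+1` vertices (`k ≥ 1`) and `L` an
`m`-assignment for `P` with `m ≥ 3`.  With `N(c,d)` the number of proper `L`-colorings of `P`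
coloring the first vertex with `c` and the last with `d`:
`N(c,d) ≥ ((m-1)^{2k+1} - (m-1)) / (m(m-1))` for all `(c,d) ∈ L(x₁) × L(x_{2k+1})`, and
there are at least `m` pairs `(y,z) ∈ L(x₁) × L(x_{2k+1})` with
`N(y,z) ≥ ((m-1)^{2k} + (m-1)) / m`. -/
theorem path_even_count_bounds (k m : ℕ) (hk : 1 ≤ k) (hm : 3 ≤ m)
    (L : Fin (2*k+1) → Finset ℕ) (hL : ∀ v, (L v).card = m) :
    (∀ c ∈ L 0, ∀ d ∈ L (Fin.last (2*k)),
      ((m - 1 : ℝ)^(2*k+1) - (m - 1)) / (m * (m - 1)) ≤ (pathCount (2*k) L c d : ℝ)) ∧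
    (m ≤ {p : ℕ × ℕ | p.1 ∈ L 0 ∧ p.2 ∈ L (Fin.last (2*k)) ∧
      ((m - 1 : ℝ)^(2*k) + (m - 1)) / m ≤ (pathCount (2*k) L p.1 p.2 : ℝ)}.ncard) := by
  obtain ⟨σ, hσ⟩ := exists_equiv_pathCount_ge m hm (2*k) L hL
  have hm3 : (3 : ℝ) ≤ m := by exact_mod_cast hm
  have heven : (-1 : ℝ)^(2*k) = 1 := by simp
  simp only [heven, one_mul] at hσ
  constructor
  · intro c hc d hd
    refine le_trans ?_ (hσ ⟨c, hc⟩ ⟨d, hd⟩)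
    have h1 : (m - 1 : ℝ) ≠ 0 := by linarith
    have e : ((m - 1 : ℝ)^(2*k+1) - (m - 1)) / (m * (m - 1)) = ((m - 1 : ℝ)^(2*k) - 1) / m := by
      field_simp
      ring
    rw [e]
    split_ifs
    · gcongr
      linarith
    · exact le_rfl
  · set S := {p : ℕ × ℕ | p.1 ∈ L 0 ∧ p.2 ∈ L (Fin.last (2*k)) ∧
      ((m - 1 : ℝ)^(2*k) + (m - 1)) / m ≤ (pathCount (2*k) L p.1 p.2 : ℝ)}
    have hfin : S.Finite := by
      refine (L 0 ×ˢ L (Fin.last (2*k))).finite_toSet.subset ?_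
      intro p hp
      exact Finset.mem_coe.mpr (Finset.mem_product.mpr ⟨hp.1, hp.2.1⟩)
    -- the graph of `σ` consists of `m` such pairs
    let g : L 0 → ℕ × ℕ := fun c => (c, σ c)
    have hg : Function.Injective g := fun a b h => Subtype.ext (Prod.ext_iff.mp h).1
    have hsub : Set.range g ⊆ S := by
      rintro _ ⟨c, rfl⟩
      exact ⟨c.2, (σ c).2, by simpa using hσ c (σ c)⟩
    calc m = (Set.range g).ncard := by
          rw [← Nat.card_coe_set_eq, Nat.card_range_of_injective hg]
          simp [hL]
      _ ≤ S.ncard := Set.ncard_le_ncard hsub hfin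
end

section
/- Let G be a graph and L an m-assignment for G. Suppose uv ∈ E(G), |L(u) − L(v)| = d ≥ 1, and for every x ∈ L(u) and y ∈ L(v) with x ≠ y there are at least C proper L-colorings of G that color u with x and v with y. Then P(G,L) ≥ P_DP(G,m) + C·d. -/
/-!
Extend the identity on `L(u) ∩ L(v)` to a bijection `τ : L(u) → L(v)`. The `m`-fold cover whose
fibers are the lists, and whose matchings join equal colors except over `uv`, where `x` is matched
to `τ x`, has as its colorings exactly those proper `L`-colorings `f` with `τ (f u) ≠ f v`: a common
color of `u` and `v` is fixed by `τ`, so it is still forbidden. That the cover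
has at most that many colorings is enough, and is witnessed by an injection
(`numDPColorings_twistedCover_le`).

The proper `L`-colorings thus lost are those with `τ (f u) = f v`. For each of the `d` colors
`x ∈ L(u) \ L(v)` there are at least `C` of them with `f u = x`, since `τ x ∈ L(v)` differs from
`x`; for different `x` they are different.
-/

/-- A proper `L`-coloring of `G`: each vertex gets a color from its list,
and adjacent vertices get different colors. -/
def IsProperListColoring {V : Type*} (G : SimpleGraph V) (L : V → Finset ℕ) (f : V → ℕ) : Prop :=
  (∀ v, f v ∈ L v) ∧ ∀ ⦃u w : V⦄, G.Adj u w → f u ≠ f w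

/-- `P(G,L)`: the number of proper `L`-colorings of `G`. -/
noncomputable def numListColorings {V : Type*} (G : SimpleGraph V) (L : V → Finset ℕ) : ℕ :=
  Nat.card {f : V → ℕ // IsProperListColoring G L f}

/-- An `m`-fold DP-cover of `G`, presented in canonical form: the cover graph `H` lives on
`V × Fin m` (so the fiber over `v` is `{v} × Fin m`, giving the required partition into
lists of size `m`), edges of `H` only join fibers of adjacent vertices of `G`, and the
edges between two fibers form a (partial) matching. -/
structure DPCover {V : Type*} (G : SimpleGraph V) (m : ℕ) where
  /-- The cover graph. -/
  H : SimpleGraph (V × Fin m)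
  /-- Edges of `H` only join fibers over adjacent vertices of `G`. -/
  adj_support : ∀ ⦃a b : V × Fin m⦄, H.Adj a b → G.Adj a.1 b.1
  /-- The edges between any two fibers form a matching. -/
  adj_matching : ∀ ⦃a b b' : V × Fin m⦄, H.Adj a b → H.Adj a b' → b.1 = b'.1 → b = b'

/-- The number of proper `𝓗`-colorings (independent transversals) of `G` for a DP-cover
`𝓗`; a transversal picks one cover vertex `(v, t v)` in each fiber. -/
noncomputable def numDPColorings {V : Type*} (G : SimpleGraph V) (m : ℕ)
    (𝓗 : DPCover G m) : ℕ :=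
  Nat.card {t : V → Fin m // ∀ u w : V, ¬ 𝓗.H.Adj (u, t u) (w, t w)}

/-- The DP color function `P_{DP}(G,m)`: the minimum number of proper `𝓗`-colorings over
all `m`-fold covers `𝓗` of `G`. -/
noncomputable def dpColorFn {V : Type*} (G : SimpleGraph V) (m : ℕ) : ℕ :=
  sInf {n | ∃ 𝓗 : DPCover G m, numDPColorings G m 𝓗 = n}

/-- Between finite sets `s`, `t` of equal size some bijection fixes `s ∩ t` pointwise. It is encoded as
a total function on `ℕ`, injective on `s`; surjectivity onto `t` is implied by the cardinalities. -/
lemma exists_injOn_mapsTo_fixing_inter {s t : Finset ℕ} (h : s.card = t.card) :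
    ∃ τ : ℕ → ℕ, Set.InjOn τ s ∧ (∀ x ∈ s, τ x ∈ t) ∧ ∀ x ∈ s, x ∈ t → τ x = x := by
  classical
  obtain ⟨g, hg⟩ := Finset.exists_equiv_extend_of_card_eq (α := s) (t := t)
    (by simpa using h) (s := Finset.univ.filter fun x => (x : ℕ) ∈ t) (f := Subtype.val)
    (by
      intro x hx
      simp only [Finset.mem_image, Finset.mem_filter] at hx
      obtain ⟨y, hy, rfl⟩ := hx
      exact hy.2)
    Subtype.val_injective.injOn
  refine ⟨fun x => if hx : x ∈ s then g ⟨x, hx⟩ else x, ?_, ?_, ?_⟩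
  · intro x hx y hy hxy
    have hx' : x ∈ s := hx
    have hy' : y ∈ s := hy
    simp only [hx', hy', dif_pos] at hxy
    simpa using g.injective (Subtype.ext hxy)
  · intro x hx
    simp only [hx, dif_pos]
    exact (g ⟨x, hx⟩).2
  · intro x hx hxt
    simp only [hx, dif_pos]
    exact hg ⟨x, hx⟩ (by simpa using hxt)

open Classical in
/-- The label that color `x` at the vertex `a` carries towards the vertex `b`: it is `τ x` if
`(a, b) = (u, v)` and `x` otherwise. In the twisted cover two colors of adjacent vertices conflict
when the labels they carry towards each other agree. -/
noncomputable def twistLabel {V : Type*} (u v : V) (τ : ℕ → ℕ) (a b : V) (x : ℕ) : ℕ :=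
  if a = u ∧ b = v then τ x else x

/-- The cover of `G` whose fiber over `w` is identified with `L w` by `e w`, with equal colors
matched over every edge except `uv`, where `x ∈ L u` is matched to `τ x`. -/
noncomputable def twistedCover {V : Type*} (G : SimpleGraph V) {m : ℕ} (L : V → Finset ℕ)
    (e : ∀ w, Fin m ≃ L w) (u v : V) (τ : ℕ → ℕ) (hτ : Set.InjOn τ (L u)) : DPCover G m where
  H :=
    { Adj := fun p q => G.Adj p.1 q.1 ∧
        twistLabel u v τ p.1 q.1 (e p.1 p.2) = twistLabel u v τ q.1 p.1 (e q.1 q.2)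
      symm := ⟨fun _ _ h => ⟨h.1.symm, h.2.symm⟩⟩
      loopless := ⟨fun p h => G.loopless.irrefl p.1 h.1⟩ }
  adj_support := fun _ _ h => h.1
  adj_matching := by
    rintro ⟨a, i⟩ ⟨b, j⟩ ⟨b', j'⟩ ⟨-, h⟩ ⟨-, h'⟩ hb
    obtain rfl : b = b' := hb
    have key : twistLabel u v τ b a (e b j) = twistLabel u v τ b a (e b j') := h.symm.trans h'
    have hjj : (e b j : ℕ) = e b j' := by
      unfold twistLabel at key
      split_ifs at key with hba
      · obtain ⟨rfl, -⟩ := hba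
        exact hτ (e b j).2 (e b j').2 key
      · exact key
    rw [(e b).injective (Subtype.ext hjj)]

/-- Reading fibers as lists maps the colorings of the twisted cover injectively to the proper
`L`-colorings `f` with `τ (f u) ≠ f v`. -/
lemma numDPColorings_twistedCover_le {V : Type*} (G : SimpleGraph V) {m : ℕ}
    (L : V → Finset ℕ) (e : ∀ w, Fin m ≃ L w) {u v : V} (huv : G.Adj u v) (τ : ℕ → ℕ)
    (hτ : Set.InjOn τ (L u)) (hfix : ∀ x ∈ L u, x ∈ L v → τ x = x)
    (hfin : {f : V → ℕ | IsProperListColoring G L f}.Finite) :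
    numDPColorings G m (twistedCover G L e u v τ hτ) ≤
      {f : V → ℕ | IsProperListColoring G L f ∧ τ (f u) ≠ f v}.ncard := by
  have hfin' : {f : V → ℕ | IsProperListColoring G L f ∧ τ (f u) ≠ f v}.Finite :=
    hfin.subset fun f hf => hf.1
  have : Finite {f : V → ℕ | IsProperListColoring G L f ∧ τ (f u) ≠ f v} := hfin'
  have hlab : ∀ t : V → Fin m,
      (∀ a b, ¬ (twistedCover G L e u v τ hτ).H.Adj (a, t a) (b, t b)) →
      ∀ a b, G.Adj a b →
        twistLabel u v τ a b (e a (t a)) ≠ twistLabel u v τ b a (e b (t b)) :=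
    fun t ht a b hab h => ht a b ⟨hab, h⟩
  have hne : u ≠ v := huv.ne
  have hτne : ∀ t : V → Fin m,
      (∀ a b, ¬ (twistedCover G L e u v τ hτ).H.Adj (a, t a) (b, t b)) →
      τ (e u (t u)) ≠ e v (t v) := by
    intro t ht
    simpa [twistLabel, hne, hne.symm] using hlab t ht u v huv
  have hfixne : ∀ t : V → Fin m,
      (∀ a b, ¬ (twistedCover G L e u v τ hτ).H.Adj (a, t a) (b, t b)) →
      (e u (t u) : ℕ) ≠ e v (t v) := by
    -- A common color of `u` and `v` lies in both lists, so `τ` fixes it.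
    intro t ht h
    refine hτne t ht ?_
    rw [hfix _ (e u (t u)).2 (h ▸ (e v (t v)).2), h]
  unfold numDPColorings
  rw [← Nat.card_coe_set_eq]
  refine Nat.card_le_card_of_injective
    (fun t => ⟨fun w => e w (t.1 w), ⟨fun w => (e w (t.1 w)).2, ?_⟩, hτne t.1 t.2⟩) ?_
  · intro a b hab h
    by_cases h1 : a = u ∧ b = v
    · obtain ⟨rfl, rfl⟩ := h1
      exact hfixne t.1 t.2 h
    by_cases h2 : b = u ∧ a = v
    · obtain ⟨rfl, rfl⟩ := h2
      exact hfixne t.1 t.2 h.symm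
    exact hlab t.1 t.2 a b hab (by simpa only [twistLabel, if_neg h1, if_neg h2] using h)
  · intro t t' h
    refine Subtype.ext (funext fun w => (e w).injective (Subtype.ext ?_))
    exact congrFun (congrArg Subtype.val h) w

/-- Let `G` be a graph and `L` an `m`-assignment for `G`.  Suppose `uv ∈ E(G)`,
`|L(u) - L(v)| = d ≥ 1`, and for every `x ∈ L(u)`, `y ∈ L(v)` with `x ≠ y` there are at
least `C` proper `L`-colorings of `G` coloring `u` with `x` and `v` with `y`.  Then
`P(G,L) ≥ P_{DP}(G,m) + C·d`. -/
theorem numListColorings_ge_dp_add {V : Type*} [Fintype V] (G : SimpleGraph V) (m : ℕ)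
    (L : V → Finset ℕ) (hL : ∀ v, (L v).card = m) (u v : V) (huv : G.Adj u v)
    (d C : ℕ) (hd : ((L u) \ (L v)).card = d) (hd1 : 1 ≤ d)
    (hC : ∀ x ∈ L u, ∀ y ∈ L v, x ≠ y →
      C ≤ Nat.card {f : V → ℕ // IsProperListColoring G L f ∧ f u = x ∧ f v = y}) :
    dpColorFn G m + C * d ≤ numListColorings G L := by
  classical
  obtain ⟨τ, hinj, hmaps, hfix⟩ :=
    exists_injOn_mapsTo_fixing_inter ((hL u).trans (hL v).symm)
  have hfin : {f : V → ℕ | IsProperListColoring G L f}.Finite :=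
    (Fintype.piFinset L).finite_toSet.subset fun f hf => by
      simpa [Fintype.mem_piFinset] using hf.1
  let e : ∀ w, Fin m ≃ L w := fun w => ((L w).equivFinOfCardEq (hL w)).symm
  have hdp : dpColorFn G m ≤ {f : V → ℕ | IsProperListColoring G L f ∧ τ (f u) ≠ f v}.ncard :=
    le_trans (Nat.sInf_le ⟨twistedCover G L e u v τ hinj, rfl⟩)
      (numDPColorings_twistedCover_le G L e huv τ hinj hfix hfin)
  let A : Finset (V → ℕ) := hfin.toFinset
  have hA : numListColorings G L = A.card :=
    (Nat.card_coe_set_eq _).trans (Set.ncard_eq_toFinset_card _ hfin)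
  have hB : {f : V → ℕ | IsProperListColoring G L f ∧ τ (f u) ≠ f v}.ncard =
      (A.filter fun f => ¬ τ (f u) = f v).card := by
    rw [← Set.ncard_coe_finset]
    congr 1
    ext f
    simp [A]
  have hlost : C * d ≤ (A.filter fun f => τ (f u) = f v).card := by
    let D : ℕ → Finset (V → ℕ) := fun x => A.filter fun f => f u = x ∧ f v = τ x
    have hD : ∀ x ∈ L u \ L v, C ≤ (D x).card := by
      intro x hx
      rw [Finset.mem_sdiff] at hx
      have hxne : x ≠ τ x := fun h => hx.2 (h ▸ hmaps x hx.1)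
      refine (hC x hx.1 (τ x) (hmaps x hx.1) hxne).trans (le_of_eq ?_)
      rw [← Set.ncard_coe_finset]
      refine (Nat.card_coe_set_eq
        {f : V → ℕ | IsProperListColoring G L f ∧ f u = x ∧ f v = τ x}).trans ?_
      congr 1
      ext f
      simp [D, A]
    have hdisj : Set.PairwiseDisjoint (↑(L u \ L v) : Set ℕ) D := by
      intro x _ y _ hxy
      refine Finset.disjoint_left.2 fun f hf hf' => hxy ?_
      exact (Finset.mem_filter.1 hf).2.1.symm.trans (Finset.mem_filter.1 hf').2.1
    calc C * d = (L u \ L v).card • C := by rw [hd, smul_eq_mul, mul_comm]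
      _ ≤ ∑ x ∈ L u \ L v, (D x).card := Finset.card_nsmul_le_sum _ _ _ hD
      _ = ((L u \ L v).biUnion D).card := (Finset.card_biUnion hdisj).symm
      _ ≤ _ := Finset.card_le_card fun f hf => by
        obtain ⟨x, -, hx⟩ := Finset.mem_biUnion.1 hf
        obtain ⟨hfA, rfl, hfv⟩ := Finset.mem_filter.1 hx
        exact Finset.mem_filter.2 ⟨hfA, hfv.symm⟩
  have hsplit := A.card_filter_add_card_filter_not (fun f => τ (f u) = f v)
  omega
end

section
/- Let G = Θ(2,2,2k) with k ≥ 2 and let L be an m-assignment for G with m ≥ 4. If there is an edge wz ∈ E(G) such that there exist x ∈ L(w) − L(z) and y ∈ L(z) − L(w), then there are at least (m−1)^{2k−1}(m−2)² proper L-colorings of G that color w with x and z with y. -/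
/-- The chromatic polynomial `P(G,m)`: the number of proper colorings using colors from `{1,…,m}`. -/
noncomputable def chromPoly {V : Type*} (G : SimpleGraph V) (m : ℕ) : ℕ :=
  numListColorings G (fun _ => Finset.Icc 1 m)

/-- The list color function `P_ℓ(G,m)`: the minimum number of proper `L`-colorings
over all `m`-assignments `L`. -/
noncomputable def listColorFn {V : Type*} (G : SimpleGraph V) (m : ℕ) : ℕ :=
  sInf {n | ∃ L : V → Finset ℕ, (∀ v, (L v).card = m) ∧ numListColorings G L = n}

/-- The generalized theta graph `Θ(2,2,2k)` on vertex set `Fin (2k+3)`: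
`u = 0`, `v = 1`, the internal vertices of the two paths of length 2 are `2` and `3`,
and the internal vertices `z_1, …, z_{2k-1}` of the path of length `2k` are `4, …, 2k+2`. -/
def thetaGraph (k : ℕ) : SimpleGraph (Fin (2*k+3)) :=
  SimpleGraph.fromRel (fun a b =>
    (a.val = 0 ∧ b.val = 2) ∨ (a.val = 2 ∧ b.val = 1) ∨
    (a.val = 0 ∧ b.val = 3) ∨ (a.val = 3 ∧ b.val = 1) ∨
    (a.val = 0 ∧ b.val = 4) ∨
    (4 ≤ a.val ∧ b.val = a.val + 1 ∧ a.val + 1 ≤ 2*k+2) ∨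
    (a.val = 2*k+2 ∧ b.val = 1))

/-! ### Greedy bounds for list colorings -/

/-- Greedy lower bound for list colorings. The number `c v` bounds from below the colors left for
`v` once a set `S` of neighbors of rank at most `r v` has been colored from its lists. -/
theorem prod_le_card_listColorings {V : Type*} [Fintype V] (G : SimpleGraph V)
    (L : V → Finset ℕ) (r c : V → ℕ)
    (hc : ∀ (v : V) (f : V → ℕ) (S : Finset V),
      (∀ u ∈ S, G.Adj u v ∧ r u ≤ r v ∧ f u ∈ L u) → c v ≤ (L v \ S.image f).card) :
    ∏ v, c v ≤ Nat.card {f : V → ℕ // IsProperListColoring G L f} := by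
  classical
  -- Partial colorings of `s` are functions extended by the color `0` outside `s`.
  let A : Finset V → Finset (V → ℕ) := fun s =>
    (Fintype.piFinset (fun v => if v ∈ s then L v else {0})).filter
      (fun f => ∀ u ∈ s, ∀ v ∈ s, G.Adj u v → f u ≠ f v)
  have memA : ∀ s f, f ∈ A s ↔ (∀ v, (v ∈ s → f v ∈ L v) ∧ (v ∉ s → f v = 0)) ∧
      ∀ u ∈ s, ∀ v ∈ s, G.Adj u v → f u ≠ f v := by
    intro s f
    simp only [A, Finset.mem_filter, Fintype.mem_piFinset]
    refine and_congr_left fun _ => forall_congr' fun v => ?_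
    by_cases h : v ∈ s <;> simp [h]
  have key : ∀ s : Finset V, ∏ v ∈ s, c v ≤ (A s).card := by
    intro s
    induction s using Finset.induction_on_max_value r with
    | empty =>
      simp only [Finset.prod_empty, Nat.one_le_iff_ne_zero, ← Nat.pos_iff_ne_zero]
      exact Finset.card_pos.2 ⟨fun _ => 0, (memA _ _).2 (by simp)⟩
    | insert a s ha hmax ih =>
      rw [Finset.prod_insert ha, mul_comm]
      -- The admissible colors of `a`, given the partial coloring `f` of `s`.
      let T : (V → ℕ) → Finset ℕ := fun f => L a \ (s.filter (fun u => G.Adj u a)).image f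
      have hT : ∀ f ∈ A s, c a ≤ (T f).card := by
        intro f hf
        refine hc a f _ fun u hu => ?_
        rw [Finset.mem_filter] at hu
        exact ⟨hu.2, hmax u hu.1, (((memA s f).1 hf).1 u).1 hu.1⟩
      calc (∏ v ∈ s, c v) * c a ≤ (A s).card * c a := Nat.mul_le_mul_right _ ih
        _ = ∑ f ∈ A s, c a := by simp
        _ ≤ ∑ f ∈ A s, (T f).card := Finset.sum_le_sum hT
        _ = ((A s).sigma T).card := (Finset.card_sigma _ _).symm
        _ ≤ (A (insert a s)).card := by
          refine Finset.card_le_card_of_injOn (fun p => Function.update p.1 a p.2) ?_ ?_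
          · rintro ⟨f, t⟩ hp
            simp only [Finset.coe_sigma, Set.mem_sigma_iff, Finset.mem_coe] at hp
            obtain ⟨hf, ht⟩ := hp
            rw [memA] at hf
            simp only [T, Finset.mem_sdiff, Finset.mem_image, Finset.mem_filter, not_exists,
              not_and] at ht
            simp only [Finset.mem_coe]
            rw [memA]
            constructor
            · intro v
              by_cases hv : v = a
              · subst hv; simpa using ht.1
              · simpa [hv] using hf.1 v
            · intro u hu v hv huv
              by_cases hu' : u = a <;> by_cases hv' : v = a
              · subst hu' hv'; exact (G.irrefl huv).elim
              · subst hu'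
                have hvs : v ∈ s := by simpa [hv'] using hv
                simpa [hv'] using fun h => ht.2 v ⟨hvs, huv.symm⟩ h.symm
              · subst hv'
                have hus : u ∈ s := by simpa [hu'] using hu
                simpa [hu'] using ht.2 u ⟨hus, huv⟩
              · have hus : u ∈ s := by simpa [hu'] using hu
                have hvs : v ∈ s := by simpa [hv'] using hv
                simpa [hu', hv'] using hf.2 u hus v hvs huv
          · rintro ⟨f, t⟩ hf ⟨g, t'⟩ hg h
            simp only [Finset.coe_sigma, Set.mem_sigma_iff, Finset.mem_coe] at hf hg
            have h1 : t = t' := by simpa using congrFun h a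
            have h2 : f = g := by
              funext v
              by_cases hv : v = a
              · subst hv
                rw [(((memA s f).1 hf.1).1 v).2 ha, (((memA s g).1 hg.1).1 v).2 ha]
              · simpa [hv] using congrFun h v
            subst h1 h2; rfl
  refine (key Finset.univ).trans (le_of_eq ?_)
  rw [← Nat.card_eq_finsetCard]
  refine Nat.card_congr (Equiv.subtypeEquivRight fun f => ?_)
  rw [memA]
  simp [IsProperListColoring]

/-- Greedy count when the adjacent vertices `w`, `z` receive the distinct colors `x`, `y`, two
exceptional vertices `p`, `q` have at most two earlier neighbors, and all others at most one. -/
theorem greedy_two_exceptions {V : Type*} [Fintype V] (G : SimpleGraph V)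
    (L : V → Finset ℕ) (m : ℕ) (hL : ∀ v, (L v).card = m) (w z p q : V) (x y : ℕ)
    (hx : x ∈ L w) (hy : y ∈ L z) (hxy : x ≠ y) (r : V → ℕ)
    (hwz : w ≠ z) (hwp : w ≠ p) (hwq : w ≠ q) (hzp : z ≠ p) (hzq : z ≠ q) (hpq : p ≠ q)
    (hw : ∀ u, G.Adj u w → r u ≤ r w → u = z) (hz : ∀ u, G.Adj u z → r u ≤ r z → u = w)
    (hp : ∃ a b, ∀ u, G.Adj u p → r u ≤ r p → u = a ∨ u = b)
    (hq : ∃ a b, ∀ u, G.Adj u q → r u ≤ r q → u = a ∨ u = b)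
    (hv : ∀ v, v ≠ w → v ≠ z → v ≠ p → v ≠ q → ∀ u u', G.Adj u v → r u ≤ r v →
      G.Adj u' v → r u' ≤ r v → u = u') :
    (m - 1) ^ (Fintype.card V - 4) * (m - 2) ^ 2 ≤
      Nat.card {f : V → ℕ // IsProperListColoring G L f ∧ f w = x ∧ f z = y} := by
  classical
  let L' : V → Finset ℕ := fun v => if v = w then {x} else if v = z then {y} else L v
  let c : V → ℕ := fun v => if v = w ∨ v = z then 1 else if v = p ∨ v = q then m - 2 else m - 1
  have hL'w : L' w = {x} := by simp [L']
  have hL'z : L' z = {y} := by simp [L', hwz.symm]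
  have hL' : ∀ v, v ≠ w → v ≠ z → L' v = L v := fun v h1 h2 => by simp [L', h1, h2]
  have hprod : ∏ v, c v = (m - 1) ^ (Fintype.card V - 4) * (m - 2) ^ 2 := by
    have h4 : ({w, z, p, q} : Finset V).card = 4 := by
      simp [Finset.card_insert_of_notMem, hwz, hwp, hwq, hzp, hzq, hpq]
    rw [← Finset.prod_compl_mul_prod ({w, z, p, q} : Finset V)]
    congr 1
    · rw [Finset.prod_congr rfl (g := fun _ => m - 1), Finset.prod_const, Finset.card_compl, h4]
      intro v hv
      simp only [Finset.mem_compl, Finset.mem_insert, Finset.mem_singleton, not_or] at hv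
      simp [c, hv]
    · simp [c, hwz, hwp, hwq, hzp, hzq, hpq, hwp.symm, hzp.symm, hwq.symm, hzq.symm, sq]
  have hcard : ∀ (A : Finset ℕ) (S : Finset V) (f : V → ℕ) (d : ℕ), A.card = m → S.card ≤ d →
      m - d ≤ (A \ S.image f).card := by
    intro A S f d hA hS
    have h1 := Finset.le_card_sdiff (S.image f) A
    have h2 := Finset.card_image_le (s := S) (f := f)
    omega
  have htwo : ∀ (S : Finset V) (a b : V), (∀ u ∈ S, u = a ∨ u = b) → S.card ≤ 2 := by
    intro S a b h
    exact (Finset.card_le_card (t := {a, b}) fun u hu => by simpa using h u hu).trans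
      Finset.card_le_two
  rw [← hprod]
  refine (prod_le_card_listColorings G L' r c ?_).trans (le_of_eq ?_)
  · intro v f S hS
    by_cases h1 : v = w
    · subst h1
      have : ∀ u ∈ S, f u = y := by
        intro u hu
        obtain ⟨ha, hr, hf⟩ := hS u hu
        rw [hw u ha hr, hL'z] at hf
        rw [hw u ha hr]; simpa using hf
      have hmem : x ∈ L' v \ S.image f := by
        simp only [hL'w, Finset.mem_sdiff, Finset.mem_singleton, Finset.mem_image, true_and]
        rintro ⟨u, hu, h⟩
        exact hxy (h.symm.trans (this u hu))
      simpa [c] using Finset.card_pos.2 ⟨x, hmem⟩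
    by_cases h2 : v = z
    · subst h2
      have : ∀ u ∈ S, f u = x := by
        intro u hu
        obtain ⟨ha, hr, hf⟩ := hS u hu
        rw [hz u ha hr, hL'w] at hf
        rw [hz u ha hr]; simpa using hf
      have hmem : y ∈ L' v \ S.image f := by
        simp only [hL'z, Finset.mem_sdiff, Finset.mem_singleton, Finset.mem_image, true_and]
        rintro ⟨u, hu, h⟩
        exact hxy ((this u hu).symm.trans h)
      simpa [c] using Finset.card_pos.2 ⟨y, hmem⟩
    rw [hL' v h1 h2]
    by_cases h3 : v = p
    · obtain ⟨a, b, hab⟩ := hp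
      have : c v = m - 2 := by simp [c, h3, hwp.symm, hzp.symm]
      rw [this]
      subst h3
      exact hcard _ _ _ _ (hL v) (htwo S a b fun u hu => hab u (hS u hu).1 (hS u hu).2.1)
    by_cases h4 : v = q
    · obtain ⟨a, b, hab⟩ := hq
      have : c v = m - 2 := by simp [c, h4, hwq.symm, hzq.symm]
      rw [this]
      subst h4
      exact hcard _ _ _ _ (hL v) (htwo S a b fun u hu => hab u (hS u hu).1 (hS u hu).2.1)
    have : c v = m - 1 := by simp [c, h1, h2, h3, h4]
    rw [this]
    refine hcard _ _ _ _ (hL v) (Finset.card_le_one.2 fun u hu u' hu' => ?_)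
    exact hv v h1 h2 h3 h4 u u' (hS u hu).1 (hS u hu).2.1 (hS u' hu').1 (hS u' hu').2.1
  · refine Nat.card_congr (Equiv.subtypeEquivRight fun f => ?_)
    constructor
    · rintro ⟨h1, h2⟩
      have hfw : f w = x := by simpa [hL'w] using h1 w
      have hfz : f z = y := by simpa [hL'z] using h1 z
      refine ⟨⟨fun v => ?_, h2⟩, hfw, hfz⟩
      by_cases hvw : v = w
      · rw [hvw, hfw]; exact hx
      by_cases hvz : v = z
      · rw [hvz, hfz]; exact hy
      rw [← hL' v hvw hvz]; exact h1 v
    · rintro ⟨⟨h1, h2⟩, hfw, hfz⟩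
      refine ⟨fun v => ?_, h2⟩
      by_cases hvw : v = w
      · rw [hvw, hL'w, hfw]; simp
      by_cases hvz : v = z
      · rw [hvz, hL'z, hfz]; simp
      rw [hL' v hvw hvz]; exact h1 v

/-! ### Orders on the vertices of the theta graph -/

theorem thetaGraph_adj {k : ℕ} {a b : Fin (2*k+3)} : (thetaGraph k).Adj a b ↔ a ≠ b ∧
    (((a.val = 0 ∧ b.val = 2) ∨ (a.val = 2 ∧ b.val = 1) ∨
    (a.val = 0 ∧ b.val = 3) ∨ (a.val = 3 ∧ b.val = 1) ∨
    (a.val = 0 ∧ b.val = 4) ∨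
    (4 ≤ a.val ∧ b.val = a.val + 1 ∧ a.val + 1 ≤ 2*k+2) ∨
    (a.val = 2*k+2 ∧ b.val = 1)) ∨
    ((b.val = 0 ∧ a.val = 2) ∨ (b.val = 2 ∧ a.val = 1) ∨
    (b.val = 0 ∧ a.val = 3) ∨ (b.val = 3 ∧ a.val = 1) ∨
    (b.val = 0 ∧ a.val = 4) ∨
    (4 ≤ b.val ∧ a.val = b.val + 1 ∧ b.val + 1 ≤ 2*k+2) ∨
    (b.val = 2*k+2 ∧ a.val = 1))) :=
  SimpleGraph.fromRel_adj _ _ _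

/-- The count for an edge between an end vertex and the middle vertex `b` of a path of length two,
where `c` is the middle vertex of the other one. -/
theorem theta_count_short (k m : ℕ) (hk : 2 ≤ k)
    (L : Fin (2*k+3) → Finset ℕ) (hL : ∀ v, (L v).card = m)
    (w z : Fin (2*k+3)) (x y : ℕ) (hx : x ∈ L w) (hy : y ∈ L z) (hxy : x ≠ y)
    (b c : ℕ) (hbc : (b = 2 ∧ c = 3) ∨ (b = 3 ∧ c = 2))
    (hwz : (w.val ≤ 1 ∧ z.val = b) ∨ (w.val = b ∧ z.val ≤ 1)) :
    (m - 1)^(2*k-1) * (m - 2)^2 ≤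
      Nat.card {f : Fin (2*k+3) → ℕ //
        IsProperListColoring (thetaGraph k) L f ∧ f w = x ∧ f z = y} := by
  -- The ends `0` and `1` share a rank: one of them is `w` or `z`, and they are not adjacent.
  let r : Fin (2*k+3) → ℕ := fun v =>
    if v.val = b then 0 else if v.val ≤ 1 then 1 else if v.val = c then 2 else v.val
  have hr : ∀ v, (v.val = b ∧ r v = 0) ∨ (v.val ≤ 1 ∧ r v = 1) ∨ (v.val = c ∧ r v = 2) ∨
      (4 ≤ v.val ∧ r v = v.val) := by
    intro v; simp only [r]; split_ifs <;> omega
  have hcard : 2 * k - 1 = Fintype.card (Fin (2*k+3)) - 4 := by rw [Fintype.card_fin]; omega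
  rw [hcard]
  refine greedy_two_exceptions (thetaGraph k) L m hL w z ⟨c, by omega⟩ ⟨2*k+2, by omega⟩ x y
    hx hy hxy r ?_ ?_ ?_ ?_ ?_ ?_ ?_ ?_ ⟨⟨0, by omega⟩, ⟨1, by omega⟩, ?_⟩
    ⟨⟨2*k+1, by omega⟩, ⟨1, by omega⟩, ?_⟩ ?_
  · simp only [ne_eq, Fin.ext_iff]; omega
  · simp only [ne_eq, Fin.ext_iff]; omega
  · simp only [ne_eq, Fin.ext_iff]; omega
  · simp only [ne_eq, Fin.ext_iff]; omega
  · simp only [ne_eq, Fin.ext_iff]; omega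
  · simp only [ne_eq, Fin.ext_iff]; omega
  · intro u h hu
    have h1 := hr u
    have h2 := hr w
    rw [thetaGraph_adj] at h
    rw [Fin.ext_iff]
    omega
  · intro u h hu
    have h1 := hr u
    have h2 := hr z
    rw [thetaGraph_adj] at h
    rw [Fin.ext_iff]
    omega
  · intro u h hu
    rw [thetaGraph_adj] at h
    simp only [Fin.ext_iff] at h ⊢
    omega
  · intro u h hu
    rw [thetaGraph_adj] at h
    simp only [Fin.ext_iff] at h ⊢
    omega
  · intro v hvw hvz hvp hvq u u' h hu h' hu'
    simp only [ne_eq, Fin.ext_iff] at hvw hvz hvp hvq ⊢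
    have hvr := hr v
    -- Off the exceptional vertices, the earlier neighbor is determined by the vertex.
    have H : ∀ u : Fin (2*k+3), (thetaGraph k).Adj u v → r u ≤ r v →
        (v.val ≤ 1 ∧ u.val = b) ∨ (v.val = 4 ∧ u.val = 0) ∨
          (5 ≤ v.val ∧ u.val + 1 = v.val) := by
      intro u h hu
      rw [thetaGraph_adj] at h
      have h1 := hr u
      omega
    have := H u h hu
    have := H u' h' hu'
    omega

/-- The count for an edge of the path of length `2k`. -/
theorem theta_count_long (k m : ℕ) (hk : 2 ≤ k)
    (L : Fin (2*k+3) → Finset ℕ) (hL : ∀ v, (L v).card = m)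
    (w z : Fin (2*k+3)) (x y : ℕ) (hx : x ∈ L w) (hy : y ∈ L z) (hxy : x ≠ y)
    (hwz : (thetaGraph k).Adj w z) (hw2 : w.val ≠ 2) (hw3 : w.val ≠ 3)
    (hz2 : z.val ≠ 2) (hz3 : z.val ≠ 3) :
    (m - 1)^(2*k-1) * (m - 2)^2 ≤
      Nat.card {f : Fin (2*k+3) → ℕ //
        IsProperListColoring (thetaGraph k) L f ∧ f w = x ∧ f z = y} := by
  -- The position on the long path, which runs from `3` (vertex `0`) to `2k+3` (vertex `1`).
  let pos : Fin (2*k+3) → ℕ := fun v =>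
    if v.val = 0 then 3 else if v.val = 1 then 2*k+3 else v.val
  have hpos : ∀ v, (v.val = 0 ∧ pos v = 3) ∨ (v.val = 1 ∧ pos v = 2*k+3) ∨
      (2 ≤ v.val ∧ v.val ≤ 2*k+2 ∧ pos v = v.val) := by
    intro v; simp only [pos]; split_ifs <;> omega
  have hadj : ∀ u v : Fin (2*k+3), (thetaGraph k).Adj u v → u.val ≠ 2 → u.val ≠ 3 → v.val ≠ 2 →
      v.val ≠ 3 → pos u + 1 = pos v ∨ pos v + 1 = pos u := by
    intro u v h _ _ _ _
    rw [thetaGraph_adj] at h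
    have h1 := hpos u
    have h2 := hpos v
    omega
  have hinj : ∀ u v : Fin (2*k+3), u.val ≠ 2 → u.val ≠ 3 → v.val ≠ 2 → v.val ≠ 3 →
      pos u = pos v → u = v := by
    intro u v _ _ _ _ h
    have h1 := hpos u
    have h2 := hpos v
    rw [Fin.ext_iff]
    omega
  -- Twice the distance from the midpoint of the edge `wz`.
  let r : Fin (2*k+3) → ℕ := fun v =>
    if v.val = 2 ∨ v.val = 3 then 8*k+20
    else (2 * pos v - (pos w + pos z)) + ((pos w + pos z) - 2 * pos v)
  have hr : ∀ v, ((v.val = 2 ∨ v.val = 3) ∧ r v = 8*k+20) ∨ (v.val ≠ 2 ∧ v.val ≠ 3 ∧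
      r v = (2 * pos v - (pos w + pos z)) + ((pos w + pos z) - 2 * pos v)) := by
    intro v; simp only [r]; split_ifs <;> omega
  have hwzp := hadj w z hwz hw2 hw3 hz2 hz3
  have hpw := hpos w
  have hpz := hpos z
  have hback : ∀ u v : Fin (2*k+3), v.val ≠ 2 → v.val ≠ 3 → r u ≤ r v →
      u.val ≠ 2 ∧ u.val ≠ 3 := by
    intro u v h2 h3 h
    have h4 := hr u
    have h5 := hr v
    have h6 := hpos v
    omega
  -- An earlier neighbor is one step closer to the edge `wz`.
  have hstep : ∀ u v : Fin (2*k+3), v.val ≠ 2 → v.val ≠ 3 → (thetaGraph k).Adj u v →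
      r u ≤ r v → (pos u + 1 = pos v ∧ pos w + pos z < 2 * pos v) ∨
        (pos v + 1 = pos u ∧ 2 * pos v < pos w + pos z) := by
    intro u v h2 h3 h hu
    obtain ⟨h4, h5⟩ := hback u v h2 h3 hu
    have h6 := hadj u v h h4 h5 h2 h3
    have h7 := hr u
    have h8 := hr v
    omega
  have hcard : 2 * k - 1 = Fintype.card (Fin (2*k+3)) - 4 := by rw [Fintype.card_fin]; omega
  rw [hcard]
  refine greedy_two_exceptions (thetaGraph k) L m hL w z ⟨2, by omega⟩ ⟨3, by omega⟩ x y
    hx hy hxy r hwz.ne ?_ ?_ ?_ ?_ ?_ ?_ ?_ ⟨⟨0, by omega⟩, ⟨1, by omega⟩, ?_⟩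
    ⟨⟨0, by omega⟩, ⟨1, by omega⟩, ?_⟩ ?_
  · simp only [ne_eq, Fin.ext_iff]; omega
  · simp only [ne_eq, Fin.ext_iff]; omega
  · simp only [ne_eq, Fin.ext_iff]; omega
  · simp only [ne_eq, Fin.ext_iff]; omega
  · simp only [ne_eq, Fin.ext_iff]; omega
  · intro u h hu
    obtain ⟨h4, h5⟩ := hback u w hw2 hw3 hu
    have := hstep u w hw2 hw3 h hu
    exact hinj u z h4 h5 hz2 hz3 (by omega)
  · intro u h hu
    obtain ⟨h4, h5⟩ := hback u z hz2 hz3 hu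
    have := hstep u z hz2 hz3 h hu
    exact hinj u w h4 h5 hw2 hw3 (by omega)
  · intro u h hu
    rw [thetaGraph_adj] at h
    simp only [Fin.ext_iff] at h ⊢
    omega
  · intro u h hu
    rw [thetaGraph_adj] at h
    simp only [Fin.ext_iff] at h ⊢
    omega
  · intro v hvw hvz hvp hvq u u' h hu h' hu'
    have hv2 : v.val ≠ 2 := fun e => hvp (Fin.ext e)
    have hv3 : v.val ≠ 3 := fun e => hvq (Fin.ext e)
    obtain ⟨h4, h5⟩ := hback u v hv2 hv3 hu
    obtain ⟨h4', h5'⟩ := hback u' v hv2 hv3 hu'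
    have := hstep u v hv2 hv3 h hu
    have := hstep u' v hv2 hv3 h' hu'
    exact hinj u u' h4 h5 h4' h5' (by omega)

/-- Let `G = Θ(2,2,2k)` with `k ≥ 2` and let `L` be an `m`-assignment for `G` with `m ≥ 4`.
If `wz` is an edge of `G` with `x ∈ L(w) - L(z)` and `y ∈ L(z) - L(w)`, then there are at
least `(m-1)^{2k-1}(m-2)²` proper `L`-colorings of `G` coloring `w` with `x` and
`z` with `y`. -/
theorem theta_greedy_count (k m : ℕ) (hk : 2 ≤ k) (hm : 4 ≤ m)
    (L : Fin (2*k+3) → Finset ℕ) (hL : ∀ v, (L v).card = m)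
    (w z : Fin (2*k+3)) (hwz : (thetaGraph k).Adj w z)
    (x y : ℕ) (hx : x ∈ (L w) \ (L z)) (hy : y ∈ (L z) \ (L w)) :
    (m - 1)^(2*k-1) * (m - 2)^2 ≤
      Nat.card {f : Fin (2*k+3) → ℕ //
        IsProperListColoring (thetaGraph k) L f ∧ f w = x ∧ f z = y} := by
  rw [Finset.mem_sdiff] at hx hy
  have hxy : x ≠ y := fun h => hx.2 (h ▸ hy.1)
  have hadj := thetaGraph_adj.1 hwz
  by_cases h2 : w.val = 2 ∨ z.val = 2
  · exact theta_count_short k m hk L hL w z x y hx.1 hy.1 hxy 2 3 (by omega) (by omega)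
  by_cases h3 : w.val = 3 ∨ z.val = 3
  · exact theta_count_short k m hk L hL w z x y hx.1 hy.1 hxy 3 2 (by omega) (by omega)
  exact theta_count_long k m hk L hL w z x y hx.1 hy.1 hxy hwz (by omega) (by omega)
    (by omega) (by omega)
end

section
/- Let G = Θ(2,2,2k) with k ≥ 2, whose end vertices are u and v, and let L be an m-assignment for G with m ≥ 4 and L(u) ≠ L(v). Then P(G,L) ≥ P(G,m). -/
namespace ThetaList

open Finset

/-! ### Adding vertices one at a time -/

/-- The edges `i < j` of the theta graph with unbounded long path, whose last vertex is not joined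
to `v`. Vertices are natural numbers, numbered as in `thetaGraph`. -/
def E (i j : ℕ) : Prop :=
  (j = 2 ∧ i ≤ 1) ∨ (j = 3 ∧ i ≤ 1) ∨ (j = 4 ∧ i = 0) ∨ (5 ≤ j ∧ i + 1 = j)

instance : DecidableRel E := fun i j => by unfold E; infer_instance

/-- The colors available at vertex `N` when the vertices below `N` are colored by `f`. -/
def avail (L : ℕ → Finset ℕ) (N : ℕ) (f : ℕ → ℕ) : Finset ℕ :=
  (L N).filter (fun c => ∀ i < N, E i N → f i ≠ c)

open scoped Classical in
/-- The proper colorings of the graph `E` on the vertices below `N`, extended by `0`. -/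
noncomputable def S (L : ℕ → Finset ℕ) : ℕ → Finset (ℕ → ℕ)
  | 0 => {fun _ => 0}
  | N + 1 => (S L N).biUnion (fun f => (avail L N f).image (fun c => Function.update f N c))

lemma mem_S (L : ℕ → Finset ℕ) (N : ℕ) (f : ℕ → ℕ) :
    f ∈ S L N ↔ (∀ i, N ≤ i → f i = 0) ∧ (∀ i < N, f i ∈ L i) ∧
      ∀ j < N, ∀ i < j, E i j → f i ≠ f j := by
  induction N generalizing f with
  | zero => simp [S, funext_iff]
  | succ N ih =>
    simp only [S, mem_biUnion, mem_image, ih, avail, mem_filter]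
    constructor
    · rintro ⟨g, ⟨h0, h1, h2⟩, c, ⟨hc, hc'⟩, rfl⟩
      refine ⟨fun i hi => ?_, fun i hi => ?_, fun j hj i hi hE => ?_⟩
      · rw [Function.update_of_ne (by omega)]; exact h0 i (by omega)
      · rcases eq_or_ne i N with rfl | hne
        · simpa using hc
        · rw [Function.update_of_ne hne]; exact h1 i (by omega)
      · rw [Function.update_of_ne (by omega : i ≠ N)]
        rcases eq_or_ne j N with rfl | hne
        · simpa using hc' i hi hE
        · rw [Function.update_of_ne hne]; exact h2 j (by omega) i hi hE
    · rintro ⟨h0, h1, h2⟩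
      refine ⟨Function.update f N 0, ⟨fun i hi => ?_, fun i hi => ?_, fun j hj i hi hE => ?_⟩,
        f N, ⟨h1 N (by omega), fun i hi hE => ?_⟩, by simp⟩
      · rcases eq_or_ne i N with rfl | hne
        · simp
        · rw [Function.update_of_ne hne]; exact h0 i (by omega)
      · rw [Function.update_of_ne (by omega)]; exact h1 i (by omega)
      · rw [Function.update_of_ne (by omega), Function.update_of_ne (by omega)]
        exact h2 j (by omega) i hi hE
      · rw [Function.update_of_ne (by omega)]; exact h2 N (by omega) i hi hE

open scoped Classical in
lemma sum_S_succ (L : ℕ → Finset ℕ) (N : ℕ) (g : (ℕ → ℕ) → ℕ) :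
    ∑ f ∈ S L (N + 1), g f =
      ∑ f ∈ S L N, ∑ c ∈ avail L N f, g (Function.update f N c) := by
  rw [S, sum_biUnion]
  · refine sum_congr rfl fun f _ => ?_
    rw [sum_image]
    intro c _ c' _ h
    simpa using congrFun h N
  · intro f hf f' hf' hne
    rw [Function.onFun, Finset.disjoint_left]
    intro x hx hx'
    obtain ⟨c, -, rfl⟩ := mem_image.1 hx
    obtain ⟨c', -, h⟩ := mem_image.1 hx'
    apply hne
    funext i
    rcases eq_or_ne i N with rfl | hi
    · rw [((mem_S L i f).1 hf).1 i le_rfl, ((mem_S L i f').1 hf').1 i le_rfl]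
    · simpa [Function.update_of_ne hi] using (congrFun h i).symm

lemma avail_path (L : ℕ → Finset ℕ) (N : ℕ) (f : ℕ → ℕ) :
    avail L (N + 5) f = (L (N + 5)).erase (f (N + 4)) := by
  ext c
  rw [avail, mem_filter]
  rw [mem_erase]
  constructor
  · rintro ⟨h1, h2⟩
    exact ⟨(h2 (N + 4) (by omega) (by unfold E; omega)).symm, h1⟩
  · rintro ⟨h1, h2⟩
    refine ⟨h2, fun i hi hE => ?_⟩
    unfold E at hE
    obtain rfl : i = N + 4 := by omega
    exact h1.symm

lemma avail_four (L : ℕ → Finset ℕ) (f : ℕ → ℕ) : avail L 4 f = (L 4).erase (f 0) := by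
  ext c
  rw [avail, mem_filter]
  rw [mem_erase]
  constructor
  · rintro ⟨h1, h2⟩
    exact ⟨(h2 0 (by omega) (by unfold E; omega)).symm, h1⟩
  · rintro ⟨h1, h2⟩
    refine ⟨h2, fun i hi hE => ?_⟩
    unfold E at hE
    obtain rfl : i = 0 := by omega
    exact h1.symm

lemma avail_mid (L : ℕ → Finset ℕ) (N : ℕ) (hN : N = 2 ∨ N = 3) (f : ℕ → ℕ) :
    avail L N f = L N \ {f 0, f 1} := by
  ext c
  rw [avail, mem_filter, mem_sdiff, mem_insert, mem_singleton, not_or]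
  constructor
  · rintro ⟨h1, h2⟩
    exact ⟨h1, (h2 0 (by omega) (by unfold E; omega)).symm, (h2 1 (by omega) (by unfold E; omega)).symm⟩
  · rintro ⟨h1, h2, h3⟩
    refine ⟨h1, fun i hi hE => ?_⟩
    unfold E at hE
    obtain rfl | rfl : i = 0 ∨ i = 1 := by omega
    · exact Ne.symm h2
    · exact Ne.symm h3

lemma avail_ends (L : ℕ → Finset ℕ) (N : ℕ) (hN : N ≤ 1) (f : ℕ → ℕ) :
    avail L N f = L N := by
  refine filter_true_of_mem fun c _ i hi hE => ?_
  unfold E at hE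
  omega

/-- The number of colorings of a path with lists `l (j-1), …, l 0` (in this order) whose first
color differs from `a` and whose last color differs from `b`. For `j = 0` the colors `a` and `b`
themselves have to differ. -/
def pathCount (l : ℕ → Finset ℕ) (b : ℕ) : ℕ → ℕ → ℕ
  | 0, a => if a = b then 0 else 1
  | j + 1, a => ∑ c ∈ (l j).erase a, pathCount l b j c

/-- Coloring the long path from `v` backwards: the last `j` of its vertices have been summed out. -/
lemma sum_S_path (L : ℕ → Finset ℕ) (k j r : ℕ) (h : j + r = 2 * k + 2) :
    ∑ f ∈ S L (2 * k + 7), (if f (2 * k + 6) = f 1 then 0 else 1) =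
      ∑ f ∈ S L (r + 5), pathCount (fun i => L (2 * k + 6 - i)) (f 1) j (f (r + 4)) := by
  induction j generalizing r with
  | zero =>
    obtain rfl : r = 2 * k + 2 := by omega
    rfl
  | succ j ih =>
    rw [ih (r + 1) (by omega), sum_S_succ]
    refine sum_congr rfl fun f _ => ?_
    have hr : 2 * k + 6 - j = r + 5 := by omega
    rw [avail_path, pathCount, hr]
    refine sum_congr rfl fun c _ => ?_
    rw [Function.update_of_ne (by omega)]
    simp

/-- Here `k + 2` plays the role of the parameter of `thetaGraph`. -/
lemma sum_S_eq (L : ℕ → Finset ℕ) (k : ℕ) :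
    ∑ f ∈ S L (2 * k + 7), (if f (2 * k + 6) = f 1 then 0 else 1) =
      ∑ a ∈ L 0, ∑ b ∈ L 1, (L 2 \ {a, b}).card * (L 3 \ {a, b}).card *
        pathCount (fun i => L (2 * k + 6 - i)) b (2 * k + 3) a := by
  have h4 : 2 * k + 6 - (2 * k + 2) = 4 := by omega
  rw [sum_S_path L k (2 * k + 2) 0 (by omega)]
  have step : ∀ f : ℕ → ℕ, ∑ c ∈ avail L 4 f,
      pathCount (fun i => L (2 * k + 6 - i)) (f 1) (2 * k + 2) c =
      pathCount (fun i => L (2 * k + 6 - i)) (f 1) (2 * k + 3) (f 0) := by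
    intro f
    rw [avail_four, pathCount, h4]
  rw [sum_S_succ]
  simp only [zero_add, Function.update_self, Function.update_of_ne (by decide : (1 : ℕ) ≠ 4), step]
  rw [sum_S_succ L 3, sum_S_succ L 2, sum_S_succ L 1, sum_S_succ L 0, S, sum_singleton]
  simp only [avail_ends L 0 (by omega), avail_ends L 1 le_rfl,
    avail_mid L 2 (by omega), avail_mid L 3 (by omega)]
  simp [Function.update_of_ne, mul_assoc]

/-- A list assignment on `Fin (n + 1)` extended to `ℕ`; the value outside the range is some list of `L`, so
that the lists keep their common size. -/
def ext {n : ℕ} (L : Fin (n + 1) → Finset ℕ) (i : ℕ) : Finset ℕ :=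
  if h : i < n + 1 then L ⟨i, h⟩ else L 0

lemma ext_val {n : ℕ} (L : Fin (n + 1) → Finset ℕ) (i : Fin (n + 1)) : ext L i = L i :=
  dif_pos i.2

lemma adj_iff (k : ℕ) (a b : Fin (2 * (k + 2) + 3)) (h : a.val < b.val) :
    (thetaGraph (k + 2)).Adj a b ↔ E a b ∨ (a.val = 1 ∧ b.val = 2 * k + 6) := by
  have ha := a.2
  have hb := b.2
  simp only [thetaGraph, SimpleGraph.fromRel_adj, E, ne_eq, Fin.ext_iff]
  omega

lemma card_eq_sum_S (k : ℕ) (L : Fin (2 * (k + 2) + 3) → Finset ℕ) :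
    numListColorings (thetaGraph (k + 2)) L =
      ∑ f ∈ S (ext L) (2 * k + 7), (if f (2 * k + 6) = f 1 then 0 else 1) := by
  have e : ∑ f ∈ S (ext L) (2 * k + 7), (if f (2 * k + 6) = f 1 then 0 else 1) =
      ((S (ext L) (2 * k + 7)).filter (fun f => f (2 * k + 6) ≠ f 1)).card := by
    rw [card_filter]
    refine sum_congr rfl fun f _ => ?_
    split_ifs <;> simp_all
  rw [e, numListColorings, ← Nat.card_eq_finsetCard]
  refine Nat.card_congr
    { toFun := fun f => ⟨fun i => if h : i < 2 * k + 7 then f.1 ⟨i, h⟩ else 0, ?_⟩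
      invFun := fun f => ⟨fun i => f.1 i, ?_⟩
      left_inv := ?_
      right_inv := ?_ }
  · obtain ⟨f, hf, hadj⟩ := f
    rw [mem_filter, mem_S]
    refine ⟨⟨fun i hi => dif_neg (by omega), fun i hi => ?_, fun j hj i hi hE => ?_⟩, ?_⟩
    · simp only [hi, dif_pos]
      rw [ext_val (n := 2 * (k + 2) + 2) L ⟨i, hi⟩]
      exact hf _
    · simp only [hj, hi.trans hj, dif_pos]
      exact hadj ((adj_iff k ⟨i, hi.trans hj⟩ ⟨j, hj⟩ hi).2 (Or.inl hE))
    · simp only [show 2 * k + 6 < 2 * k + 7 by omega, show 1 < 2 * k + 7 by omega, dif_pos]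
      exact (hadj ((adj_iff k ⟨1, by omega⟩ ⟨2 * k + 6, by omega⟩
        (show 1 < 2 * k + 6 by omega)).2 (Or.inr ⟨rfl, rfl⟩))).symm
  · obtain ⟨f, hf⟩ := f
    rw [mem_filter, mem_S] at hf
    obtain ⟨⟨-, h1, h2⟩, h3⟩ := hf
    have lt : ∀ a b : Fin (2 * (k + 2) + 3), a.val < b.val →
        (thetaGraph (k + 2)).Adj a b → f a ≠ f b := by
      intro a b hab hadj
      rcases (adj_iff k a b hab).1 hadj with h | ⟨ha, hb⟩
      · exact h2 b b.2 a hab h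
      · rw [ha, hb]; exact h3.symm
    refine ⟨fun v => ?_, fun a b hadj => ?_⟩
    · have := h1 v v.2
      rwa [ext_val] at this
    · rcases lt_trichotomy a.val b.val with h | h | h
      · exact lt a b h hadj
      · exact absurd (Fin.ext h) hadj.ne
      · exact (lt b a h hadj.symm).symm
  · rintro ⟨f, hf⟩
    ext i
    exact dif_pos i.2
  · rintro ⟨f, hf⟩
    rw [mem_filter, mem_S] at hf
    refine Subtype.ext (funext fun i => ?_)
    by_cases h : i < 2 * k + 7
    · exact dif_pos h
    · exact (dif_neg h).trans (hf.1.1 i (by omega)).symm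

lemma numListColorings_eq (k : ℕ) (L : Fin (2 * (k + 2) + 3) → Finset ℕ) :
    numListColorings (thetaGraph (k + 2)) L =
      ∑ a ∈ ext L 0, ∑ b ∈ ext L 1, (ext L 2 \ {a, b}).card * (ext L 3 \ {a, b}).card *
        pathCount (fun i => ext L (2 * k + 6 - i)) b (2 * k + 3) a := by
  rw [card_eq_sum_S, sum_S_eq]

/-! ### Colorings of the long path -/

/-- The number of colorings from `s + 2` common colors of the interior of a path of length `2i`
whose ends have two different prescribed colors, i.e. `((s+1)^(2i) - 1) / (s+2)`. -/
def q (s : ℕ) : ℕ → ℕ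
  | 0 => 0
  | i + 1 => q s i + s * (s + 1) ^ (2 * i)

lemma q_closed (s i : ℕ) : q s i * (s + 2) + 1 = (s + 1) ^ (2 * i) := by
  induction i with
  | zero => simp [q]
  | succ i ih =>
    rw [q, show 2 * (i + 1) = 2 * i + 2 by ring, pow_add, ← ih]
    ring

lemma q_succ (s i : ℕ) : q s (i + 1) = (s + 1) ^ 2 * q s i + s := by
  rw [q, ← q_closed]; ring

lemma q_mono (s i : ℕ) : q s 2 ≤ q s (i + 2) := by
  induction i with
  | zero => rfl
  | succ i ih => exact ih.trans (Nat.le_add_right _ _)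

/-- A form of `pathCount l b (j+1) a = ∑ c ∈ l j, pathCount l b j c - [a ∈ l j] pathCount l b j a`
without subtraction. -/
lemma pathCount_add (l : ℕ → Finset ℕ) (b j a : ℕ) :
    pathCount l b (j + 1) a + (if a ∈ l j then pathCount l b j a else 0) =
      ∑ c ∈ l j, pathCount l b j c := by
  split_ifs with h
  · exact sum_erase_add _ _ h
  · rw [pathCount, erase_eq_of_notMem h, add_zero]

/-- `pathCount_add` summed over the possible first colors in `X`. -/
lemma sum_pathCount_succ (l : ℕ → Finset ℕ) (b j : ℕ) (X : Finset ℕ) :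
    ∑ c ∈ X, pathCount l b (j + 1) c + ∑ c ∈ l j ∩ X, pathCount l b j c =
      X.card * ∑ c ∈ l j, pathCount l b j c := by
  have h : ∑ c ∈ l j ∩ X, pathCount l b j c =
      ∑ c ∈ X, if c ∈ l j then pathCount l b j c else 0 := by
    rw [← sum_filter, inter_comm, filter_mem_eq_inter]
  rw [h, ← sum_add_distrib, sum_congr rfl fun c _ => pathCount_add l b j c, sum_const, smul_eq_mul]

lemma pow_le_sum (s : ℕ) (l : ℕ → Finset ℕ) (hl : ∀ j, (l j).card = s + 2) (b j : ℕ) :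
    (s + 1) ^ (j + 1) ≤ ∑ c ∈ l j, pathCount l b j c := by
  induction j with
  | zero =>
    have h1 : (s + 2) - 1 ≤ ((l 0).erase b).card := by
      rw [← hl 0]; exact pred_card_le_card_erase
    calc (s + 1) ^ (0 + 1) ≤ ((l 0).erase b).card := by simpa using h1
      _ = ∑ c ∈ (l 0).erase b, pathCount l b 0 c := by
        rw [card_eq_sum_ones]
        refine sum_congr rfl fun c hc => ?_
        rw [pathCount, if_neg (ne_of_mem_erase hc)]
      _ ≤ _ := sum_le_sum_of_subset (erase_subset _ _)
  | succ j ih =>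
    have h1 := sum_pathCount_succ l b j (l (j + 1))
    have h2 : ∑ c ∈ l j ∩ l (j + 1), pathCount l b j c ≤ ∑ c ∈ l j, pathCount l b j c :=
      sum_le_sum_of_subset inter_subset_left
    rw [hl] at h1
    rw [pow_succ]
    nlinarith

/-- Prescribing the two end colors of a path of even length leaves at least as many colorings as in
the case of equal lists and different end colors. -/
lemma le_pathCount (s : ℕ) (l : ℕ → Finset ℕ) (hl : ∀ j, (l j).card = s + 2) (b i a : ℕ) :
    q s (i + 1) ≤ pathCount l b (2 * i + 1) a := by
  induction i generalizing a with
  | zero =>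
    have h1 : (s + 2) - 1 - 1 ≤ (((l 0).erase a).erase b).card := by
      rw [← hl 0]
      exact (Nat.sub_le_sub_right pred_card_le_card_erase 1).trans pred_card_le_card_erase
    calc q s (0 + 1) ≤ (((l 0).erase a).erase b).card := by simpa [q] using h1
      _ = ∑ c ∈ ((l 0).erase a).erase b, pathCount l b 0 c := by
        rw [card_eq_sum_ones]
        refine sum_congr rfl fun c hc => ?_
        rw [pathCount, if_neg (ne_of_mem_erase hc)]
      _ ≤ _ := sum_le_sum_of_subset (erase_subset _ _)
  | succ i ih =>
    have h1 : s + 1 ≤ ((l (2 * i + 2)).erase a).card := by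
      have : (s + 2) - 1 ≤ ((l (2 * i + 2)).erase a).card := by
        rw [← hl (2 * i + 2)]; exact pred_card_le_card_erase
      omega
    obtain ⟨X, hX, hXc⟩ := exists_subset_card_eq h1
    -- `X` is too small to contain the preceding list, so it misses some color `c₀` of that list.
    obtain ⟨c₀, hc₀, hc₀X⟩ : ∃ c ∈ l (2 * i + 1), c ∉ X :=
      exists_mem_notMem_of_card_lt_card (by rw [hXc, hl]; omega)
    have h2 := sum_pathCount_succ l b (2 * i + 1) X
    have h3 : ∑ c ∈ l (2 * i + 1) ∩ X, pathCount l b (2 * i + 1) c +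
        pathCount l b (2 * i + 1) c₀ ≤ ∑ c ∈ l (2 * i + 1), pathCount l b (2 * i + 1) c := by
      rw [← sum_erase_add _ _ hc₀]
      refine Nat.add_le_add_right (sum_le_sum_of_subset fun c hc => ?_) _
      rw [mem_inter] at hc
      exact mem_erase.2 ⟨fun h => hc₀X (h ▸ hc.2), hc.1⟩
    have h4 : ∑ c ∈ X, pathCount l b (2 * i + 2) c ≤ pathCount l b (2 * i + 3) a :=
      sum_le_sum_of_subset hX
    have h5 := pow_le_sum s l hl b (2 * i + 1)
    have h6 := ih c₀
    rw [hXc] at h2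
    change q s (i + 1) + s * (s + 1) ^ (2 * i + 2) ≤ pathCount l b (2 * i + 3) a
    have h7 := Nat.mul_le_mul_left s h5
    simp only [show 2 * i + 1 + 1 = 2 * i + 2 by ring] at h2 h7
    linarith

/-- With equal lists the two end colors interact only through whether they coincide. -/
lemma pathCount_const (s : ℕ) (C : Finset ℕ) (hC : C.card = s + 2) (b : ℕ) (hb : b ∈ C)
    (i a : ℕ) (ha : a ∈ C) :
    pathCount (fun _ => C) b (2 * i + 1) a = q s (i + 1) + if a = b then 1 else 0 := by
  have key : ∀ j a, a ∈ C → pathCount (fun _ => C) b (j + 1) a + pathCount (fun _ => C) b j a =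
      ∑ c ∈ C, pathCount (fun _ => C) b j c := by
    intro j a ha
    have := pathCount_add (fun _ => C) b j a
    rwa [if_pos ha] at this
  have key2 : ∀ j, ∑ c ∈ C, pathCount (fun _ => C) b (j + 1) c =
      (s + 1) * ∑ c ∈ C, pathCount (fun _ => C) b j c := by
    intro j
    have := sum_pathCount_succ (fun _ => C) b j C
    rw [inter_self, hC] at this
    linarith
  have key0 : ∑ c ∈ C, pathCount (fun _ => C) b 0 c = s + 1 := by
    rw [← sum_erase_add _ _ hb, sum_congr rfl
      (g := fun _ => 1) fun c hc => by rw [pathCount, if_neg (ne_of_mem_erase hc)]]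
    simp [pathCount, card_erase_of_mem hb, hC]
  have keyS : ∀ j, ∑ c ∈ C, pathCount (fun _ => C) b j c = (s + 1) ^ (j + 1) := by
    intro j
    induction j with
    | zero => simpa using key0
    | succ j ih => rw [key2, ih]; ring
  induction i with
  | zero =>
    have h := key 0 a ha
    rw [key0] at h
    simp only [pathCount, q] at h ⊢
    split_ifs at h ⊢ <;> simp at h ⊢ <;> omega
  | succ i ih =>
    have h1 := key (2 * i + 1) a ha
    have h2 := key (2 * i + 2) a ha
    have h3 : pathCount (fun _ => C) b (2 * i + 3) a =
      pathCount (fun _ => C) b (2 * i + 1) a + s * (s + 1) ^ (2 * i + 2) := by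
      rw [keyS] at h1 h2
      simp only [show 2 * i + 1 + 1 = 2 * i + 2 by ring,
        show 2 * i + 2 + 1 = 2 * i + 3 by ring] at h1 h2
      have : (s + 1) ^ (2 * i + 3) = (s + 1) ^ (2 * i + 2) + s * (s + 1) ^ (2 * i + 2) := by ring
      omega
    change pathCount (fun _ => C) b (2 * i + 3) a = _
    rw [h3, ih]
    change _ = q s (i + 1) + s * (s + 1) ^ (2 * i + 2) + _
    ring

/-! ### The paths of length two -/

/-- Double counting: the double sum is `∑ c ∈ D, |A \ {c}| * |B \ {c}|`, in which every term is at
least `(s+1)²`, and at least `(s+1)(s+2)` for a color `c ∉ A ∩ B`. -/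
lemma le_sum_avoid (s : ℕ) (A B D : Finset ℕ) (hA : A.card = s + 2) (hB : B.card = s + 2)
    (hD : D.card = s + 2) (hAB : A ≠ B) :
    (s + 2) * (s + 1) ^ 2 + (s + 1) ≤ ∑ a ∈ A, ∑ b ∈ B, (D \ {a, b}).card := by
  have e : ∑ a ∈ A, ∑ b ∈ B, (D \ {a, b}).card =
      ∑ c ∈ D, (A.erase c).card * (B.erase c).card := by
    have h1 : ∀ a b, (D \ {a, b}).card =
        ∑ c ∈ D, (if a ≠ c then 1 else 0) * (if b ≠ c then 1 else 0) := by
      intro a b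
      rw [card_eq_sum_ones, sdiff_eq_filter, sum_filter]
      refine sum_congr rfl fun c _ => ?_
      simp only [mem_insert, mem_singleton, eq_comm (a := c)]
      split_ifs <;> simp_all
    have h2 : ∀ (X : Finset ℕ) c, (X.erase c).card = ∑ x ∈ X, if x ≠ c then 1 else 0 := by
      intro X c
      rw [← sum_filter, filter_ne', card_eq_sum_ones]
    simp only [h1, h2, sum_mul_sum]
    rw [sum_congr rfl fun a _ => sum_comm, sum_comm]
  have low : ∀ X : Finset ℕ, X.card = s + 2 → ∀ c, s + 1 ≤ (X.erase c).card := by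
    intro X hX c
    have := pred_card_le_card_erase (s := X) (a := c)
    omega
  obtain ⟨c₀, hc₀, hc₀'⟩ : ∃ c ∈ D, c ∉ A ∩ B := by
    refine exists_mem_notMem_of_card_lt_card ?_
    rw [hD, ← hA]
    refine card_lt_card (Finset.ssubset_iff_subset_ne.2 ⟨inter_subset_left, fun h => hAB ?_⟩)
    exact eq_of_subset_of_card_le (inter_eq_left.1 h) (by omega)
  have h0 : (s + 1) ^ 2 + (s + 1) ≤ (A.erase c₀).card * (B.erase c₀).card := by
    rw [mem_inter, not_and_or] at hc₀'
    rcases hc₀' with h | h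
    · rw [erase_eq_of_notMem h, hA]
      have := low B hB c₀
      nlinarith
    · rw [erase_eq_of_notMem h, hB]
      have := low A hA c₀
      nlinarith
  have h1 : (D.erase c₀).card * (s + 1) ^ 2 ≤
      ∑ c ∈ D.erase c₀, (A.erase c).card * (B.erase c).card := by
    rw [← smul_eq_mul]
    refine card_nsmul_le_sum _ _ _ fun c _ => ?_
    rw [sq]
    exact Nat.mul_le_mul (low A hA c) (low B hB c)
  rw [card_erase_of_mem hc₀, hD, show s + 2 - 1 = s + 1 by omega] at h1
  rw [e, ← sum_erase_add _ _ hc₀]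
  linarith

lemma le_card_sdiff (s : ℕ) (D : Finset ℕ) (hD : D.card = s + 2) (a b : ℕ) :
    s ≤ (D \ {a, b}).card := by
  have h1 := Finset.le_card_sdiff {a, b} D
  have h2 : ({a, b} : Finset ℕ).card ≤ 2 := card_le_two
  omega

lemma card_sdiff_const (s : ℕ) (C : Finset ℕ) (hC : C.card = s + 2) (a b : ℕ) (ha : a ∈ C)
    (hb : b ∈ C) : (C \ {a, b}).card = if a = b then s + 1 else s := by
  rw [card_sdiff_of_subset (by simp [insert_subset_iff, ha, hb]), hC]
  split_ifs with h
  · subst h; simp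
  · rw [card_pair h]; rfl

lemma chromPoly_eq (k s : ℕ) :
    chromPoly (thetaGraph (k + 2)) (s + 2) =
      (s + 2) * ((s + 1) * s ^ 2 * q s (k + 2) + (s + 1) ^ 2 * (q s (k + 2) + 1)) := by
  have hext : ∀ i, ext (n := 2 * (k + 2) + 2) (fun _ => Icc 1 (s + 2)) i = Icc 1 (s + 2) := by
    intro i; simp [ext]
  have hC : (Icc 1 (s + 2)).card = s + 2 := by simp
  rw [chromPoly, numListColorings_eq]
  simp only [hext]
  generalize Icc 1 (s + 2) = C at hC
  rw [sum_congr rfl (g := fun _ => (s + 1) * s ^ 2 * q s (k + 2) +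
    (s + 1) ^ 2 * (q s (k + 2) + 1)), sum_const, hC, smul_eq_mul]
  intro a ha
  rw [← sum_erase_add _ _ ha, sum_congr rfl (g := fun _ => s ^ 2 * q s (k + 2))]
  · rw [sum_const, card_erase_of_mem ha, hC, card_sdiff_const s C hC a a ha ha,
      show 2 * k + 3 = 2 * (k + 1) + 1 by ring, pathCount_const s C hC a ha _ a ha]
    simp
    ring
  · intro b hb
    have hne : a ≠ b := (ne_of_mem_erase hb).symm
    rw [card_sdiff_const s C hC a b ha (mem_of_mem_erase hb),
      show 2 * k + 3 = 2 * (k + 1) + 1 by ring,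
      pathCount_const s C hC b (mem_of_mem_erase hb) _ a ha, if_neg hne, if_neg hne]
    ring

lemma main (k s : ℕ) (hs : 2 ≤ s) (L : Fin (2 * (k + 2) + 3) → Finset ℕ)
    (hL : ∀ v, (L v).card = s + 2) (huv : L 0 ≠ L 1) :
    chromPoly (thetaGraph (k + 2)) (s + 2) ≤ numListColorings (thetaGraph (k + 2)) L := by
  have hext : ∀ i, (ext (n := 2 * (k + 2) + 2) L i).card = s + 2 := by
    intro i; unfold ext; split_ifs <;> exact hL _
  have huv' : ext (n := 2 * (k + 2) + 2) L 0 ≠ ext (n := 2 * (k + 2) + 2) L 1 := by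
    have h0 := ext_val (n := 2 * (k + 2) + 2) L 0
    have h1 := ext_val (n := 2 * (k + 2) + 2) L 1
    simp only [Fin.val_zero, Fin.val_one] at h0 h1
    rwa [h0, h1]
  rw [chromPoly_eq, numListColorings_eq]
  generalize ext (n := 2 * (k + 2) + 2) L = l at hext huv'
  have h2 := le_sum_avoid s _ _ (l 2) (hext 0) (hext 1) (hext 2) huv'
  have h3 := le_sum_avoid s _ _ (l 3) (hext 0) (hext 1) (hext 3) huv'
  have hq : ∀ a b, q s (k + 2) ≤ pathCount (fun i => l (2 * k + 6 - i)) b (2 * k + 3) a :=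
    fun a b => le_pathCount s _ (fun _ => hext _) b (k + 1) a
  have hM : ∑ a ∈ l 0, ∑ b ∈ l 1, s * ((l 2 \ {a, b}).card + (l 3 \ {a, b}).card) ≤
      ∑ a ∈ l 0, ∑ b ∈ l 1, ((l 2 \ {a, b}).card * (l 3 \ {a, b}).card + s ^ 2) := by
    refine sum_le_sum fun a _ => sum_le_sum fun b _ => ?_
    obtain ⟨x, hx⟩ := Nat.exists_eq_add_of_le (le_card_sdiff s _ (hext 2) a b)
    obtain ⟨y, hy⟩ := Nat.exists_eq_add_of_le (le_card_sdiff s _ (hext 3) a b)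
    rw [hx, hy]
    nlinarith [Nat.zero_le (x * y)]
  simp only [← mul_sum, sum_add_distrib, sum_const, hext, smul_eq_mul] at hM
  have hW : (∑ a ∈ l 0, ∑ b ∈ l 1, (l 2 \ {a, b}).card * (l 3 \ {a, b}).card) * q s (k + 2) ≤
      ∑ a ∈ l 0, ∑ b ∈ l 1, (l 2 \ {a, b}).card * (l 3 \ {a, b}).card *
        pathCount (fun i => l (2 * k + 6 - i)) b (2 * k + 3) a := by
    simp only [sum_mul]
    exact sum_le_sum fun a _ => sum_le_sum fun b _ => Nat.mul_le_mul_left _ (hq a b)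
  refine le_trans ?_ hW
  have hq2 := q_mono s k
  have hq2' : q s 2 = s + s * (s + 1) ^ 2 := by simp [q]
  rw [hq2'] at hq2
  generalize q s (k + 2) = Q at hq2
  generalize ∑ a ∈ l 0, ∑ b ∈ l 1, (l 2 \ {a, b}).card * (l 3 \ {a, b}).card = M at hM
  have h4 := Nat.mul_le_mul_left s (Nat.add_le_add h2 h3)
  obtain ⟨r, rfl⟩ := Nat.exists_eq_add_of_le hs
  generalize hm' : 2 + r = s at *
  have hM' : (s + 2) * ((s + 1) * s ^ 2 + (s + 1) ^ 2) + (2 * s ^ 2 + r) ≤ M := by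
    subst hm'
    nlinarith
  have h5 := Nat.mul_le_mul_right Q hM'
  have h6 : (s + 2) * (s + 1) ^ 2 ≤ (2 * s ^ 2 + r) * Q := by
    have := Nat.mul_le_mul_left (2 * s ^ 2 + r) hq2
    refine le_trans ?_ this
    subst hm'
    ring_nf
    nlinarith [Nat.zero_le r]
  linarith

end ThetaList

/-- Let `G = Θ(2,2,2k)` with `k ≥ 2`, end vertices `u = 0` and `v = 1`, and let `L` be an
`m`-assignment for `G` with `m ≥ 4` and `L(u) ≠ L(v)`.  Then `P(G,L) ≥ P(G,m)`. -/
theorem theta_differentLists_ge_chromPoly (k m : ℕ) (hk : 2 ≤ k) (hm : 4 ≤ m)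
    (L : Fin (2*k+3) → Finset ℕ) (hL : ∀ v, (L v).card = m) (huv : L 0 ≠ L 1) :
    chromPoly (thetaGraph k) m ≤ numListColorings (thetaGraph k) L := by
  obtain ⟨k, rfl⟩ := Nat.exists_eq_add_of_le' hk
  obtain ⟨s, rfl⟩ := Nat.exists_eq_add_of_le' (show 2 ≤ m by omega)
  exact ThetaList.main k s (by omega) L hL huv
end

section
/- Let G be a graph with vertex set {v₁,…,vₙ}, let m ∈ ℕ, let d₁,…,dₙ be nonnegative integers, and let L be a list assignment for G with |L(vᵢ)| = m + dᵢ for each i. Then P(G,L) ≥ ⌈P_ℓ(G,m)·Π_{i=1}^n (m+dᵢ) / mⁿ⌉. -/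
open Finset in
/-- A proper `L'`-coloring for sublists `L' v ⊆ L v` is exactly a proper `L`-coloring with
`f v ∈ L' v`. -/
theorem numListColorings_eq_card_filter {V : Type*} [Fintype V] [DecidableEq V]
    (G : SimpleGraph V) (L L' : V → Finset ℕ) (h : ∀ v, L' v ⊆ L v)
    [DecidablePred (IsProperListColoring G L)] :
    numListColorings G L' =
      #{f ∈ {f ∈ Fintype.piFinset L | IsProperListColoring G L f} | ∀ v, f v ∈ L' v} := by
  unfold numListColorings
  refine Nat.subtype_card _ fun f => ?_
  simp only [mem_filter, Fintype.mem_piFinset]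
  constructor
  · rintro ⟨⟨-, -, hG⟩, hf⟩
    exact ⟨hf, hG⟩
  · rintro ⟨hf, hG⟩
    exact ⟨⟨fun v => h v (hf v), fun v => h v (hf v), hG⟩, hf⟩

open Finset in
theorem card_filter_mem_powersetCard_le (s : Finset ℕ) (a : ℕ) (ha : a ∈ s) (k : ℕ) :
    #{t ∈ powersetCard (k + 1) s | a ∈ t} ≤ (#s - 1).choose k := by
  rw [← card_erase_of_mem ha, ← card_powersetCard]
  refine card_le_card_of_injOn (fun t => t.erase a) ?_ ?_
  · intro t ht
    simp only [coe_filter, mem_powersetCard, Set.mem_ofPred_eq] at ht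
    simp only [mem_coe, mem_powersetCard]
    exact ⟨erase_subset_erase a ht.1.1, by rw [card_erase_of_mem ht.2, ht.1.2]; rfl⟩
  · intro t ht u hu htu
    simp only [coe_filter, Set.mem_ofPred_eq] at ht hu
    rw [← insert_erase ht.2, ← insert_erase hu.2]
    exact congrArg (insert a) htu

open Finset in
/-- The double count of pairs `(L', f)` with `L' v` an `m`-subset of `L v` and `f` a proper
`L'`-coloring, where `m = k + 1`. -/
theorem prod_choose_mul_listColorFn_le {V : Type*} [Fintype V] (G : SimpleGraph V)
    (k : ℕ) (d : V → ℕ) (L : V → Finset ℕ) (hL : ∀ v, (L v).card = k + 1 + d v) :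
    (∏ v, (k + 1 + d v).choose (k + 1)) * listColorFn G (k + 1) ≤
      numListColorings G L * ∏ v, (k + d v).choose k := by
  classical
  set F : Finset (V → ℕ) := {f ∈ Fintype.piFinset L | IsProperListColoring G L f} with hF
  set S : Finset (V → Finset ℕ) := Fintype.piFinset fun v => powersetCard (k + 1) (L v) with hS
  have hScard : #S = ∏ v, (k + 1 + d v).choose (k + 1) := by
    simp [hS, Fintype.card_piFinset, hL]
  have hFcard : #F = numListColorings G L := by
    rw [numListColorings_eq_card_filter G L L fun _ => Subset.rfl, ← hF]
    congr 1
    exact (filter_true_of_mem fun f hf => (mem_filter.1 hf).2.1).symm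
  rw [← hScard, ← hFcard]
  refine card_mul_le_card_mul (fun L' f => ∀ v, f v ∈ L' v) ?_ ?_
  · intro L' hL'
    have h := fun v => mem_powersetCard.1 (Fintype.mem_piFinset.1 hL' v)
    rw [bipartiteAbove, hF, ← numListColorings_eq_card_filter G L L' fun v => (h v).1]
    exact Nat.sInf_le ⟨L', fun v => (h v).2, rfl⟩
  · intro f hf
    have hfL := (mem_filter.1 hf).2.1
    have : bipartiteBelow (fun (L' : V → Finset ℕ) (f : V → ℕ) => ∀ v, f v ∈ L' v) S f =
        Fintype.piFinset fun v => {t ∈ powersetCard (k + 1) (L v) | f v ∈ t} := by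
      ext L'
      simp [bipartiteBelow, hS, Fintype.mem_piFinset, forall_and]
    rw [this, Fintype.card_piFinset]
    refine prod_le_prod' fun v _ => ?_
    refine (card_filter_mem_powersetCard_le (L v) (f v) (hfL v) k).trans_eq ?_
    rw [hL]
    congr 1
    omega

/-- Let `G` be a graph on `n` vertices, `m ∈ ℕ`, `d : V → ℕ`, and `L` a list assignment for
`G` with `|L(v)| = m + d(v)` for each vertex `v`.  Then
`P(G,L) ≥ ⌈P_ℓ(G,m) · Π_v (m + d(v)) / mⁿ⌉`. -/
theorem numListColorings_ge_ceil {V : Type*} [Fintype V] (G : SimpleGraph V)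
    (m : ℕ) (hm : 1 ≤ m) (d : V → ℕ) (L : V → Finset ℕ)
    (hL : ∀ v, (L v).card = m + d v) :
    ⌈((listColorFn G m : ℝ) * ∏ v : V, ((m + d v : ℕ) : ℝ)) /
        (m : ℝ)^(Fintype.card V)⌉₊ ≤ numListColorings G L := by
  obtain ⟨k, rfl⟩ : ∃ k, m = k + 1 := ⟨m - 1, by omega⟩
  have hmain := prod_choose_mul_listColorFn_le G k d L hL
  have hpos : 0 < ∏ v, (k + d v).choose k :=
    Finset.prod_pos fun v _ => Nat.choose_pos (Nat.le_add_right _ _)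
  have hid : (∏ v, (k + 1 + d v)) * ∏ v, (k + d v).choose k =
      (∏ v, (k + 1 + d v).choose (k + 1)) * (k + 1) ^ Fintype.card V := by
    rw [← Finset.card_univ, ← Finset.prod_const, ← Finset.prod_mul_distrib,
      ← Finset.prod_mul_distrib]
    refine Finset.prod_congr rfl fun v _ => ?_
    have := Nat.add_one_mul_choose_eq (k + d v) k
    rwa [Nat.add_right_comm] at this
  have hnat : listColorFn G (k + 1) * ∏ v, (k + 1 + d v) ≤
      numListColorings G L * (k + 1) ^ Fintype.card V := by
    refine Nat.le_of_mul_le_mul_right ?_ hpos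
    calc listColorFn G (k + 1) * (∏ v, (k + 1 + d v)) * ∏ v, (k + d v).choose k
        = ((∏ v, (k + 1 + d v).choose (k + 1)) * listColorFn G (k + 1)) *
            (k + 1) ^ Fintype.card V := by rw [mul_assoc, hid]; ring
      _ ≤ (numListColorings G L * ∏ v, (k + d v).choose k) * (k + 1) ^ Fintype.card V :=
          Nat.mul_le_mul_right _ hmain
      _ = _ := by ring
  rw [Nat.ceil_le, div_le_iff₀ (by positivity)]
  exact_mod_cast hnat
end

section
/- Let G = K_{1,n} be a star with n ≥ 1 leaves and let L be a 2-assignment for G that does not assign the same list of colors to every vertex of G. Then P(G,L) ≥ 3. -/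
/-- A proper coloring of the star exists with prescribed center color `c` and prescribed color `d ≠ c`
at the leaf `i`. -/
lemma exists_star_coloring {n : ℕ} {L : (Fin 1 ⊕ Fin n) → Finset ℕ} (hL : ∀ v, (L v).card = 2)
    {c d : ℕ} (i : Fin n) (hc : c ∈ L (Sum.inl 0)) (hd : d ∈ L (Sum.inr i)) (hdc : d ≠ c) :
    ∃ f, IsProperListColoring (completeBipartiteGraph (Fin 1) (Fin n)) L f ∧
      f (Sum.inl 0) = c ∧ f (Sum.inr i) = d := by
  have hex : ∀ j : Fin n, ∃ e ∈ L (Sum.inr j), e ≠ c := fun j =>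
    Finset.exists_mem_ne (by rw [hL]; norm_num) c
  choose g hgL hgc using hex
  have hleaf : ∀ j, Function.update g i d j ∈ L (Sum.inr j) ∧ Function.update g i d j ≠ c := by
    intro j
    by_cases hj : j = i
    · subst hj
      simpa using ⟨hd, hdc⟩
    · simpa [hj] using ⟨hgL j, hgc j⟩
  refine ⟨Sum.elim (fun _ => c) (Function.update g i d), ⟨?_, ?_⟩, by simp, by simp⟩
  · rintro (z | j)
    · rw [Subsingleton.elim z 0]
      exact hc
    · exact (hleaf j).1
  · rintro (z | j) (z' | j') h
    · simp at h
    · exact (hleaf j').2.symm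
    · exact (hleaf j).2
    · simp at h

/-- Proper list colorings of a finite graph form a finite type, so that `Nat.card` really counts them
(it is `0` on infinite types). -/
lemma finite_properListColorings {V : Type*} [Finite V] (G : SimpleGraph V) (L : V → Finset ℕ) :
    Finite {f : V → ℕ // IsProperListColoring G L f} := by
  have h : {f : V → ℕ | ∀ v, f v ∈ (L v : Set ℕ)}.Finite :=
    Set.Finite.pi' fun v => (L v).finite_toSet
  exact (h.subset fun f hf v => hf.1 v).to_subtype

/-- Let `G = K_{1,n}` be a star with `n ≥ 1` leaves and let `L` be a `2`-assignment for `G`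
that does not assign the same list to every vertex.  Then `P(G,L) ≥ 3`. -/
theorem star_numListColorings_ge_three (n : ℕ) (hn : 1 ≤ n)
    (L : (Fin 1 ⊕ Fin n) → Finset ℕ) (hL : ∀ v, (L v).card = 2)
    (hdiff : ∃ v w : Fin 1 ⊕ Fin n, L v ≠ L w) :
    3 ≤ numListColorings (completeBipartiteGraph (Fin 1) (Fin n)) L := by
  obtain ⟨i, hi⟩ : ∃ i : Fin n, L (Sum.inr i) ≠ L (Sum.inl 0) := by
    by_contra! h
    obtain ⟨v, w, hvw⟩ := hdiff
    have hall : ∀ u, L u = L (Sum.inl 0) := by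
      rintro (z | j)
      · rw [Subsingleton.elim z 0]
      · exact h j
    exact hvw ((hall v).trans (hall w).symm)
  obtain ⟨a, ha, hai⟩ : ∃ a ∈ L (Sum.inl 0), a ∉ L (Sum.inr i) := by
    by_contra! h
    exact hi (Finset.eq_of_subset_of_card_le h (by rw [hL, hL])).symm
  obtain ⟨b, hb, hba⟩ := Finset.exists_mem_ne (by rw [hL]; norm_num : 1 < (L (Sum.inl 0)).card) a
  obtain ⟨p, hp, q, hq, hpq⟩ :=
    Finset.one_lt_card.mp (by rw [hL]; norm_num : 1 < (L (Sum.inr i)).card)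
  obtain ⟨r, hr, hrb⟩ := Finset.exists_mem_ne (by rw [hL]; norm_num : 1 < (L (Sum.inr i)).card) b
  obtain ⟨f₁, hf₁, hf₁c, hf₁i⟩ :=
    exists_star_coloring hL i ha hp (ne_of_mem_of_not_mem hp hai)
  obtain ⟨f₂, hf₂, hf₂c, hf₂i⟩ :=
    exists_star_coloring hL i ha hq (ne_of_mem_of_not_mem hq hai)
  obtain ⟨f₃, hf₃, hf₃c, -⟩ := exists_star_coloring hL i hb hr hrb
  have := finite_properListColorings (completeBipartiteGraph (Fin 1) (Fin n)) L
  have := Fintype.ofFinite {f // IsProperListColoring (completeBipartiteGraph (Fin 1) (Fin n)) L f}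
  rw [numListColorings, Nat.card_eq_fintype_card]
  refine Fintype.two_lt_card_iff.mpr ⟨⟨f₁, hf₁⟩, ⟨f₂, hf₂⟩, ⟨f₃, hf₃⟩, ?_, ?_, ?_⟩
  · intro h
    have h' : f₁ = f₂ := congrArg Subtype.val h
    exact hpq (by rw [← hf₁i, ← hf₂i, h'])
  · intro h
    have h' : f₁ = f₃ := congrArg Subtype.val h
    exact hba (by rw [← hf₁c, ← hf₃c, h'])
  · intro h
    have h' : f₂ = f₃ := congrArg Subtype.val h
    exact hba (by rw [← hf₂c, ← hf₃c, h'])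
end

section
/- Let G be a connected graph with χ(G) = 2. If P_ℓ(G,2) ≥ 1, then K₁ ∨ G is weakly enumeratively chromatic-choosable; that is, P_ℓ(K₁ ∨ G, 3) = P(K₁ ∨ G, 3). -/
/-- The join `K₁ ∨ G`: a new vertex (`none`) joined to every vertex of `G`. -/
def joinK1 {V : Type*} (G : SimpleGraph V) : SimpleGraph (Option V) :=
  SimpleGraph.fromRel (fun a b =>
    (∃ u, a = none ∧ b = some u) ∨ (∃ u w, a = some u ∧ b = some w ∧ G.Adj u w))

/-! ### Colorings of the join -/

open Classical in
/-- The proper `L`-colorings of `G`, as a finset. -/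
noncomputable def properFinset {V : Type*} [Fintype V] (G : SimpleGraph V) (L : V → Finset ℕ) :
    Finset (V → ℕ) :=
  (Fintype.piFinset L).filter (IsProperListColoring G L)

lemma mem_properFinset {V : Type*} [Fintype V] {G : SimpleGraph V} {L : V → Finset ℕ}
    {f : V → ℕ} : f ∈ properFinset G L ↔ IsProperListColoring G L f := by
  classical
  simp only [properFinset, Finset.mem_filter, Fintype.mem_piFinset, and_iff_right_iff_imp]
  exact fun h => h.1

lemma numListColorings_eq {V : Type*} [Fintype V] (G : SimpleGraph V) (L : V → Finset ℕ) :
    numListColorings G L = (properFinset G L).card := by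
  rw [numListColorings, ← Nat.card_eq_finsetCard]
  exact Nat.card_congr (Equiv.subtypeEquivRight fun f => mem_properFinset.symm)

lemma joinK1_adj_none {V : Type*} {G : SimpleGraph V} (u : V) :
    (joinK1 G).Adj none (some u) := by
  simp [joinK1]

lemma joinK1_adj_some {V : Type*} {G : SimpleGraph V} {u w : V} :
    (joinK1 G).Adj (some u) (some w) ↔ G.Adj u w := by
  simp only [joinK1, SimpleGraph.fromRel_adj]
  constructor
  · rintro ⟨-, (⟨_, h, _⟩ | ⟨x, y, h1, h2, h⟩) | (⟨_, h, _⟩ | ⟨x, y, h1, h2, h⟩)⟩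
    · cases h
    · cases h1; cases h2; exact h
    · cases h
    · cases h1; cases h2; exact h.symm
  · intro h
    exact ⟨by simpa using h.ne, Or.inl (Or.inr ⟨u, w, rfl, rfl, h⟩)⟩

/-- Coloring the apex with `c` and then `G` from the lists with `c` deleted gives a proper
coloring of the join. -/
lemma sum_le_joinK1 {V : Type*} [Fintype V] (G : SimpleGraph V) (L : Option V → Finset ℕ) :
    ∑ c ∈ L none, (properFinset G (fun v => (L (some v)).erase c)).card
      ≤ (properFinset (joinK1 G) L).card := by
  classical
  rw [← Finset.card_sigma]
  refine Finset.card_le_card_of_injOn (fun x o => Option.elim o x.1 x.2) ?_ ?_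
  · rintro ⟨c, g⟩ h
    simp only [Finset.coe_sigma, Set.mem_sigma_iff, Finset.mem_coe, mem_properFinset] at h
    obtain ⟨hc, hg, hp⟩ := h
    rw [Finset.mem_coe, mem_properFinset]
    refine ⟨?_, ?_⟩
    · rintro (_ | v)
      · exact hc
      · exact Finset.mem_of_mem_erase (hg v)
    · rintro (_ | u) (_ | w) h
      · exact absurd h ((joinK1 G).irrefl)
      · exact (Finset.ne_of_mem_erase (hg w)).symm
      · exact Finset.ne_of_mem_erase (hg u)
      · exact hp (joinK1_adj_some.1 h)
  · rintro ⟨c, g⟩ - ⟨d, k⟩ - h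
    have h1 : c = d := congrFun h none
    have h2 : g = k := funext fun v => congrFun h (some v)
    rw [h1, h2]

/-- Three colors leave just one choice for a vertex of `G` once the apex and a neighbor are
colored, so along a connected `G` everything is determined by two values. -/
lemma chromPoly_joinK1_le {V : Type*} [Fintype V] (G : SimpleGraph V) (hconn : G.Connected) :
    chromPoly (joinK1 G) 3 ≤ 6 := by
  classical
  obtain ⟨v₀⟩ := hconn.nonempty
  rw [chromPoly, numListColorings_eq]
  have hcard : (Finset.Icc 1 3 : Finset ℕ).offDiag.card = 6 := by decide
  rw [← hcard]
  refine Finset.card_le_card_of_injOn (fun f => (f none, f (some v₀))) ?_ ?_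
  · intro f hf
    rw [Finset.mem_coe, mem_properFinset] at hf
    rw [Finset.mem_coe, Finset.mem_offDiag]
    exact ⟨hf.1 _, hf.1 _, hf.2 (joinK1_adj_none v₀)⟩
  · intro f hf g hg h
    rw [Finset.mem_coe, mem_properFinset] at hf hg
    simp only [Prod.mk.injEq] at h
    obtain ⟨h0, h1⟩ := h
    have step : ∀ u w, G.Adj u w → f (some u) = g (some u) → f (some w) = g (some w) := by
      intro u w huw he
      have a1 := hf.2 (joinK1_adj_none u)
      have a2 := hf.2 (joinK1_adj_none w)
      have a3 := hf.2 (joinK1_adj_some.2 huw)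
      have b2 := hg.2 (joinK1_adj_none w)
      have b3 := hg.2 (joinK1_adj_some.2 huw)
      have c0 := Finset.mem_Icc.1 (hf.1 none)
      have c1 := Finset.mem_Icc.1 (hf.1 (some u))
      have c2 := Finset.mem_Icc.1 (hf.1 (some w))
      have c3 := Finset.mem_Icc.1 (hg.1 (some w))
      omega
    have walk : ∀ x y, G.Walk x y → f (some x) = g (some x) → f (some y) = g (some y) := by
      intro x y p
      induction p with
      | nil => exact id
      | cons hadj _ ih => exact fun he => ih (step _ _ hadj he)
    funext o
    rcases o with _ | v
    · exact h0
    · obtain ⟨p⟩ := hconn.preconnected v₀ v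
      exact walk _ _ p h1

/-! ### Lower bounds for list colorings of a 2-choosable bipartite graph -/

lemma exists_coloring_of_two_le {V : Type*} {G : SimpleGraph V} (hpl : 1 ≤ listColorFn G 2)
    {M : V → Finset ℕ} (hM : ∀ v, 2 ≤ (M v).card) : ∃ f, IsProperListColoring G M f := by
  choose L hLM hL using fun v => Finset.exists_subset_card_eq (hM v)
  have h1 : listColorFn G 2 ≤ numListColorings G L := Nat.sInf_le ⟨L, hL, rfl⟩
  have h2 : 0 < numListColorings G L := lt_of_lt_of_le hpl h1
  obtain ⟨⟨f, hf⟩⟩ := (Nat.card_pos_iff.1 h2).1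
  exact ⟨f, fun v => hLM v (hf.1 v), hf.2⟩

lemma one_le_card {V : Type*} [Fintype V] {G : SimpleGraph V} (hpl : 1 ≤ listColorFn G 2)
    {M : V → Finset ℕ} (hM : ∀ v, 2 ≤ (M v).card) : 1 ≤ (properFinset G M).card := by
  obtain ⟨f, hf⟩ := exists_coloring_of_two_le hpl hM
  exact Finset.card_pos.2 ⟨f, mem_properFinset.2 hf⟩

/-- Given one coloring, deleting its value at `u` from the list of `u` yields another one. -/
lemma two_le {V : Type*} [Fintype V] {G : SimpleGraph V} (hpl : 1 ≤ listColorFn G 2)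
    {M : V → Finset ℕ} (hM : ∀ v, 2 ≤ (M v).card) (u : V) (hu : 3 ≤ (M u).card) :
    2 ≤ (properFinset G M).card := by
  classical
  obtain ⟨f, hf⟩ := exists_coloring_of_two_le hpl hM
  obtain ⟨g, hg⟩ := exists_coloring_of_two_le (G := G) hpl
    (M := Function.update M u ((M u).erase (f u))) (by
      intro v
      by_cases h : v = u
      · subst h
        rw [Function.update_self, Finset.card_erase_of_mem (hf.1 v)]
        omega
      · rw [Function.update_of_ne h]
        exact hM v)
  have hgu : g u ∈ (M u).erase (f u) := by simpa using hg.1 u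
  have hgM : IsProperListColoring G M g := by
    refine ⟨fun v => ?_, hg.2⟩
    by_cases h : v = u
    · subst h
      exact Finset.mem_of_mem_erase hgu
    · simpa [Function.update_of_ne h] using hg.1 v
  refine Finset.one_lt_card.2 ⟨f, mem_properFinset.2 hf, g, mem_properFinset.2 hgM, ?_⟩
  rintro rfl
  exact Finset.ne_of_mem_erase hgu rfl

/-- A color `a` common to all lists is used on one side of the bipartition `p`, and arbitrary
colors other than `a` on the other side. -/
lemma isProper_side {V : Type*} {G : SimpleGraph V} (p : G.Coloring Bool) {M : V → Finset ℕ}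
    {a : ℕ} (ha : ∀ v, a ∈ M v) {h : V → ℕ} (hh : ∀ v, h v ∈ (M v).erase a) (s : Bool) :
    IsProperListColoring G M (fun v => if p v = s then h v else a) := by
  refine ⟨fun v => ?_, fun x y hxy => ?_⟩
  · dsimp only
    split_ifs
    · exact Finset.mem_of_mem_erase (hh v)
    · exact ha v
  · have hp := p.valid hxy
    have hx := Finset.ne_of_mem_erase (hh x)
    have hy := Finset.ne_of_mem_erase (hh y)
    dsimp only
    split_ifs with h1 h2 h2
    · exact absurd (h1.trans h2.symm) hp
    · exact hx
    · exact hy.symm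
    · exact absurd (by cases h3 : p x <;> cases h4 : p y <;> cases s <;> simp_all) hp

/-- With `a` on the side away from `u` there are two choices at `u`; with `a` on the side of `u`
there is a third coloring. -/
lemma three_le {V : Type*} [Fintype V] {G : SimpleGraph V} (p : G.Coloring Bool)
    {M : V → Finset ℕ} (hM : ∀ v, 2 ≤ (M v).card) (u : V) (hu : 3 ≤ (M u).card)
    {a : ℕ} (ha : ∀ v, a ∈ M v) : 3 ≤ (properFinset G M).card := by
  classical
  have hne : ∀ v, ((M v).erase a).Nonempty := by
    intro v
    rw [← Finset.card_pos, Finset.card_erase_of_mem (ha v)]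
    have := hM v
    omega
  choose h hh using hne
  obtain ⟨k, hk⟩ : (((M u).erase a).erase (h u)).Nonempty := by
    rw [← Finset.card_pos, Finset.card_erase_of_mem (hh u), Finset.card_erase_of_mem (ha u)]
    omega
  have hku := Finset.ne_of_mem_erase hk
  have hk' := Finset.mem_of_mem_erase hk
  have hh' : ∀ v, Function.update h u k v ∈ (M v).erase a := by
    intro v
    by_cases e : v = u
    · subst e
      simpa using hk'
    · simpa [Function.update_of_ne e] using hh v
  have hua := Finset.ne_of_mem_erase (hh u)
  have hka := Finset.ne_of_mem_erase hk'
  refine Finset.two_lt_card.2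
    ⟨_, mem_properFinset.2 (isProper_side p ha hh (p u)),
     _, mem_properFinset.2 (isProper_side p ha hh' (p u)),
     _, mem_properFinset.2 (isProper_side p ha hh (!p u)), ?_, ?_, ?_⟩
  · intro e
    have := congrFun e u
    simp at this
    exact hku this.symm
  · intro e
    have := congrFun e u
    simp at this
    exact hua this
  · intro e
    have := congrFun e u
    simp at this
    exact hka this

lemma isProper_two {V : Type*} {G : SimpleGraph V} (p : G.Coloring Bool) {M : V → Finset ℕ}
    {a b : ℕ} (hab : a ≠ b) (ha : ∀ v, a ∈ M v) (hb : ∀ v, b ∈ M v) (s : Bool) :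
    IsProperListColoring G M (fun v => if p v = s then a else b) :=
  isProper_side p hb (h := fun _ => a) (fun v => Finset.mem_erase.2 ⟨hab, ha v⟩) s

lemma isProper_update {V : Type*} [DecidableEq V] {G : SimpleGraph V} {M : V → Finset ℕ}
    {f : V → ℕ} (hf : IsProperListColoring G M f) {u : V} {k : ℕ} (hk : k ∈ M u)
    (hne : ∀ v, f v ≠ k) : IsProperListColoring G M (Function.update f u k) := by
  refine ⟨fun v => ?_, fun x y hxy => ?_⟩
  · by_cases e : v = u
    · subst e
      simpa using hk
    · simpa [Function.update_of_ne e] using hf.1 v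
  · by_cases e : x = u
    · subst e
      rw [Function.update_self, Function.update_of_ne hxy.ne.symm]
      exact (hne y).symm
    · rw [Function.update_of_ne e]
      by_cases e' : y = u
      · subst e'
        rw [Function.update_self]
        exact hne x
      · rw [Function.update_of_ne e']
        exact hf.2 hxy

lemma two_le_of_common {V : Type*} [Fintype V] [Nonempty V] {G : SimpleGraph V}
    (p : G.Coloring Bool) {M : V → Finset ℕ} {a b : ℕ} (hab : a ≠ b) (ha : ∀ v, a ∈ M v)
    (hb : ∀ v, b ∈ M v) : 2 ≤ (properFinset G M).card := by
  obtain ⟨u⟩ := ‹Nonempty V›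
  refine Finset.one_lt_card.2
    ⟨_, mem_properFinset.2 (isProper_two p hab ha hb (p u)),
     _, mem_properFinset.2 (isProper_two p hab ha hb (!p u)), ?_⟩
  intro e
  have := congrFun e u
  simp at this
  exact hab this

/-- The two colorings by `a` and `b` alone can each be changed at `u` to a third color; the two
results still differ at any other vertex, which exists as `V` is nontrivial. -/
lemma four_le {V : Type*} [Fintype V] [Nontrivial V] {G : SimpleGraph V}
    (p : G.Coloring Bool) {M : V → Finset ℕ} (u : V) (hu : 3 ≤ (M u).card) {a b : ℕ}
    (hab : a ≠ b) (ha : ∀ v, a ∈ M v) (hb : ∀ v, b ∈ M v) : 4 ≤ (properFinset G M).card := by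
  classical
  obtain ⟨k, hk⟩ : (((M u).erase a).erase b).Nonempty := by
    rw [← Finset.card_pos, Finset.card_erase_of_mem (Finset.mem_erase.2 ⟨hab.symm, hb u⟩),
      Finset.card_erase_of_mem (ha u)]
    omega
  simp only [Finset.mem_erase] at hk
  obtain ⟨hkb, hka, hkM⟩ := hk
  obtain ⟨w, hw⟩ := exists_ne u
  have base := isProper_two p hab ha hb
  have upd : ∀ s, IsProperListColoring G M
      (Function.update (fun v => if p v = s then a else b) u k) := by
    intro s
    refine isProper_update (base s) hkM fun v => ?_
    split_ifs
    · exact hka.symm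
    · exact hkb.symm
  have inj : Function.Injective (fun (x : Bool × Bool) =>
      if x.1 then Function.update (fun v => if p v = x.2 then a else b) u k
      else fun v => if p v = x.2 then a else b) := by
    rintro ⟨i, s⟩ ⟨j, t⟩ e
    have e1 := congrFun e u
    have e2 := congrFun e w
    have hst : s = t := by
      cases i <;> cases j <;> cases s <;> cases t <;> cases h : p w <;>
        simp [Function.update_of_ne hw, h, hab, hab.symm] at e2 ⊢
    have hij : i = j := by
      cases i <;> cases j <;> cases h : p u <;> cases s <;> cases t <;>
        simp [h, hka, hkb, hka.symm, hkb.symm] at e1 ⊢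
    rw [hst, hij]
  have h4 : (Finset.univ : Finset (Bool × Bool)).card = 4 := by decide
  rw [← h4]
  refine Finset.card_le_card_of_injOn _ (fun x _ => ?_) inj.injOn
  rw [Finset.mem_coe, mem_properFinset]
  split_ifs
  · exact upd x.2
  · exact base x.2

/-! ### Six colorings of the join -/

lemma six_le_joinK1 {V : Type*} [Fintype V] [Nontrivial V] {G : SimpleGraph V}
    (p : G.Coloring Bool) (hpl : 1 ≤ listColorFn G 2) {L : Option V → Finset ℕ}
    (hL : ∀ v, (L v).card = 3) : 6 ≤ (properFinset (joinK1 G) L).card := by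
  classical
  refine le_trans ?_ (sum_le_joinK1 G L)
  set N : ℕ → ℕ := fun c => (properFinset G (fun v => (L (some v)).erase c)).card with hN
  -- `C x`: the color `x` is common.
  let C : ℕ → Prop := fun x => ∀ v, x ∈ L (some v)
  have hM : ∀ x v, 2 ≤ ((L (some v)).erase x).card := by
    intro x v
    have h1 := Finset.pred_card_le_card_erase (s := L (some v)) (a := x)
    have h2 := hL (some v)
    omega
  have hu : ∀ x, ¬ C x → ∃ u, 3 ≤ ((L (some u)).erase x).card := by
    intro x hx
    obtain ⟨u, hxu⟩ := not_forall.1 hx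
    exact ⟨u, by rw [Finset.erase_eq_of_notMem hxu, hL]⟩
  have hmem : ∀ x y, y ≠ x → C y → ∀ v, y ∈ (L (some v)).erase x :=
    fun x y hyx hy v => Finset.mem_erase.2 ⟨hyx, hy v⟩
  have N1 : ∀ x, 1 ≤ N x := fun x => one_le_card hpl (hM x)
  have N2 : ∀ x, ¬ C x → 2 ≤ N x := fun x hx => by
    obtain ⟨u, h⟩ := hu x hx
    exact two_le hpl (hM x) u h
  have N3 : ∀ x y, ¬ C x → C y → y ≠ x → 3 ≤ N x := fun x y hx hy hyx => by
    obtain ⟨u, h⟩ := hu x hx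
    exact three_le p (hM x) u h (hmem x y hyx hy)
  have N4 : ∀ x y z, ¬ C x → C y → C z → y ≠ x → z ≠ x → y ≠ z → 4 ≤ N x :=
    fun x y z hx hy hz hyx hzx hyz => by
      obtain ⟨u, h⟩ := hu x hx
      exact four_le p u h hyz (hmem x y hyx hy) (hmem x z hzx hz)
  have N5 : ∀ x y z, C y → C z → y ≠ x → z ≠ x → y ≠ z → 2 ≤ N x :=
    fun x y z hy hz hyx hzx hyz =>
      two_le_of_common p hyz (hmem x y hyx hy) (hmem x z hzx hz)
  obtain ⟨a, b, c, hab, hac, hbc, habc⟩ := Finset.card_eq_three.1 (hL none)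
  have hsum : ∑ x ∈ L none, N x = N a + (N b + N c) := by
    rw [habc, Finset.sum_insert (by simp [hab, hac]), Finset.sum_insert (by simp [hbc]),
      Finset.sum_singleton]
  rw [hsum]
  clear_value N C
  have a1 := N1 a
  have b1 := N1 b
  have c1 := N1 c
  by_cases ha : C a <;> by_cases hb : C b <;> by_cases hc : C c
  · have := N5 a b c hb hc hab.symm hac.symm hbc
    have := N5 b a c ha hc hab hbc.symm hac
    have := N5 c a b ha hb hac hbc hab
    omega
  · have := N4 c a b hc ha hb hac hbc hab
    omega
  · have := N4 b a c hb ha hc hab hbc.symm hac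
    omega
  · have := N3 b a hb ha hab
    have := N3 c a hc ha hac
    omega
  · have := N4 a b c ha hb hc hab.symm hac.symm hbc
    omega
  · have := N3 a b ha hb hab.symm
    have := N3 c b hc hb hbc
    omega
  · have := N3 a c ha hc hac.symm
    have := N3 b c hb hc hbc.symm
    omega
  · have := N2 a ha
    have := N2 b hb
    have := N2 c hc
    omega

/-- Let `G` be a connected graph with `χ(G) = 2`.  If `P_ℓ(G,2) ≥ 1`, then `K₁ ∨ G` is
weakly enumeratively chromatic-choosable; that is, `P_ℓ(K₁ ∨ G, 3) = P(K₁ ∨ G, 3)`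
(note `χ(K₁ ∨ G) = 3`). -/
theorem joinK1_weakly_enumeratively_chromatic_choosable {V : Type*} [Fintype V]
    (G : SimpleGraph V) (hconn : G.Connected) (hchi : G.chromaticNumber = 2)
    (hpl : 1 ≤ listColorFn G 2) :
    listColorFn (joinK1 G) 3 = chromPoly (joinK1 G) 3 := by
  have hcol : G.Colorable 2 := SimpleGraph.chromaticNumber_le_iff_colorable.1 hchi.le
  have p : G.Coloring Bool := hcol.toColoring (by simp)
  have hnt : Nontrivial V := by
    by_contra h
    rw [not_nontrivial_iff_subsingleton] at h
    have h1 : G.Colorable 1 :=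
      ⟨SimpleGraph.Coloring.mk (fun _ => 0) fun {u w} huw => absurd (Subsingleton.elim u w) huw.ne⟩
    have h2 := SimpleGraph.chromaticNumber_le_iff_colorable.2 h1
    rw [hchi] at h2
    norm_num at h2
  refine le_antisymm (Nat.sInf_le ⟨fun _ => Finset.Icc 1 3, fun _ => by simp, rfl⟩) ?_
  refine le_csInf ⟨_, fun _ => Finset.Icc 1 3, fun _ => by simp, rfl⟩ ?_
  rintro n ⟨L, hL, rfl⟩
  rw [numListColorings_eq]
  exact (chromPoly_joinK1_le G hconn).trans (six_le_joinK1 p hpl hL)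
end
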